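/- arXiv:1005.5579 — 4 statements merged into one kernel-verified Lean document; each statement's English description precedes it below -/
import Mathlib

section
/- Let θ ∈ (0, π) with cos θ ∈ ℚ, and write cos θ = s/r with r, s coprime integers and r > 0. Let k and l be positive, squarefree, coprime integers. Then there exist infinitely many pairs (M, N) of θ-congruent numbers such that l·N = k·M; that is, the set of pairs (M, N) of positive squarefree integers such that M and N are both θ-congruent and l·N = k·M is infinite. -/
/-- A positive squarefree integer `n` is `θ`-congruent (where `cos θ = s / r` with
`r > 0` and `gcd(s, r) = 1`) if `n * r * sin θ` is the area of a triangle with rational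
sides and an angle `θ`; equivalently, there are positive rationals `a, b, c` with
`a * b = 2 * n * r` and `c ^ 2 = a ^ 2 + b ^ 2 - 2 * a * b * (s / r)`. -/
def IsThetaCongruent (r s : ℤ) (n : ℕ) : Prop :=
  ∃ a b c : ℚ, 0 < a ∧ 0 < b ∧ 0 < c ∧
    a * b = 2 * (n : ℚ) * (r : ℚ) ∧
    c ^ 2 = a ^ 2 + b ^ 2 - 2 * a * b * ((s : ℚ) / (r : ℚ))

/-!
A nontrivial point on `n * y ^ 2 = x * (x + (r + s)) * (x - (r - s))` makes `n` `θ`-congruent.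
Moving the root `-(r + s)` to `0` turns the cubic into `h X = X ^ 3 - C * X ^ 2 + P * X` with
`C, P > 0`. For any `x, y`, some `X` has `h (x / y * X) = (x / y) ^ 3 * h X`; up to squares
`h X = x * D` and `h (x / y * X) = y * D` for a form `D` in `x` and `y`. With `x = k * a ^ 2` and
`y = l * b ^ 2` the squarefree part `T` of `D` therefore makes both `k * T` and `l * T`
`θ`-congruent.

It remains to choose `a` and `b`. Making one of them divisible by a high power of each prime
`p ∣ k * l` forces the `p`-adic valuation of `D` to be even, so that `T` is coprime to `k * l`.
Since `x + y ∣ D`, a large prime exactly dividing `k * a ^ 2 + l * b ^ 2` divides `T`, so `T` is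
unbounded.
-/

theorem isThetaCongruent_of_ne_zero {r s : ℤ} {n : ℕ} (hr : 0 < r) (hn : n ≠ 0) {a b c : ℚ}
    (hc : c ≠ 0) (hab : a * b = 2 * n * r) (habc : c ^ 2 = a ^ 2 + b ^ 2 - 2 * a * b * (s / r)) :
    IsThetaCongruent r s n := by
  have hpos : 0 < a * b := by rw [hab]; positivity
  have habs : |a| * |b| = a * b := by rw [← abs_mul, abs_of_pos hpos]
  refine ⟨|a|, |b|, |c|, abs_pos.2 (left_ne_zero_of_mul hpos.ne'),
    abs_pos.2 (right_ne_zero_of_mul hpos.ne'), abs_pos.2 hc, habs.trans hab, ?_⟩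
  rw [mul_assoc 2, habs, sq_abs, sq_abs, sq_abs, habc, mul_assoc 2]

theorem isThetaCongruent_of_point {r s : ℤ} {n : ℕ} (hs : |s| < r) (hn : n ≠ 0) {x y : ℚ}
    (hy : y ≠ 0) (h : n * y ^ 2 = x * (x + (r + s)) * (x - (r - s))) :
    IsThetaCongruent r s n := by
  have hr : 0 < r := (abs_nonneg s).trans_lt hs
  have hsr : (0 : ℚ) < r ^ 2 - s ^ 2 := by
    have := sq_lt_sq' (abs_lt.1 hs).1 (abs_lt.1 hs).2
    exact_mod_cast sub_pos.2 this
  refine isThetaCongruent_of_ne_zero hr hn (a := (x + (r + s)) * (x - (r - s)) / y)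
    (b := 2 * r * x / y) (c := (x ^ 2 + (r ^ 2 - s ^ 2)) / y) (by positivity) ?_ ?_
  · field_simp
    linear_combination -h
  · field_simp
    ring

/-- The form `D` in `x` and `y` such that, up to nonzero rational squares, `h X = x * D` and
`h (x / y * X) = y * D`, where `h X = X ^ 3 - C * X ^ 2 + P * X`. It comes from the point
`X = P * (x + y) / (C * x)`, the one for which scaling `X` by `x / y` scales `h` by
`(x / y) ^ 3`. -/
def twistForm (C P x y : ℤ) : ℤ :=
  C * (x + y) * (P * (x + y) ^ 2 - C ^ 2 * x * y)

theorem twistForm_comm (C P x y : ℤ) : twistForm C P x y = twistForm C P y x := by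
  unfold twistForm
  ring

theorem cubic_eq_sq_mul_twistForm {C x : ℤ} (hC : C ≠ 0) (hx : x ≠ 0) (P y : ℤ) {X : ℚ}
    (hX : X = P * (x + y) / (C * x)) :
    X ^ 3 - C * X ^ 2 + P * X = (P / (C * x) ^ 2) ^ 2 * (x * twistForm C P x y : ℤ) := by
  subst hX
  unfold twistForm
  push_cast
  field_simp
  ring

theorem isThetaCongruent_of_mul_sq_eq_mul_twistForm {r s : ℤ} {n : ℕ} (hs : |s| < r) (hn : n ≠ 0)
    {x y m : ℤ} (hm : m ≠ 0)
    (h : n * m ^ 2 = x * twistForm (3 * r + s) (2 * r * (r + s)) x y) :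
    IsThetaCongruent r s n := by
  have hr : 0 < r := (abs_nonneg s).trans_lt hs
  have hrs : 0 < r + s := by linarith [neg_lt_of_abs_lt hs]
  have hx : x ≠ 0 := by
    rintro rfl
    simp [hn, hm] at h
  obtain ⟨C, hC⟩ : ∃ C, C = 3 * r + s := ⟨_, rfl⟩
  obtain ⟨P, hP⟩ : ∃ P, P = 2 * r * (r + s) := ⟨_, rfl⟩
  have hC0 : C ≠ 0 := by linarith
  have hP0 : P ≠ 0 := by
    rw [hP]
    positivity
  rw [← hC, ← hP] at h
  have hcubic := cubic_eq_sq_mul_twistForm hC0 hx P y rfl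
  set X : ℚ := P * (x + y) / (C * x)
  have hfactor : X ^ 3 - C * X ^ 2 + P * X =
      (X - (r + s)) * (X - (r + s) + (r + s)) * (X - (r + s) - (r - s)) := by
    rw [hC, hP]
    push_cast
    ring
  refine isThetaCongruent_of_point hs hn (x := X - (r + s)) (y := P / (C * x) ^ 2 * m)
    (by positivity) ?_
  rw [← hfactor, hcubic, ← h]
  push_cast
  ring

theorem twistForm_pos {C P x y : ℤ} (hC : 0 < C) (hP : 0 < P) (hx : 0 < x) (hy : 0 < y)
    (hxy : C ^ 2 * x ≤ P * y) : 0 < twistForm C P x y := by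
  have h : C ^ 2 * x * y < P * (x + y) ^ 2 := calc
    C ^ 2 * x * y ≤ P * y * y := by gcongr
    _ < P * y * y + P * x * (x + 2 * y) := lt_add_of_pos_right _ (by positivity)
    _ = P * (x + y) ^ 2 := by ring
  exact mul_pos (mul_pos hC (add_pos hx hy)) (sub_pos.2 h)

theorem dvd_twistForm_sub (C P x y : ℤ) : x ∣ twistForm C P x y - C * P * y ^ 3 := by
  use C * (P * (x ^ 2 + 3 * x * y + 3 * y ^ 2) - C ^ 2 * (x + y) * y)
  unfold twistForm
  ring

theorem add_dvd_twistForm (C P x y : ℤ) : x + y ∣ twistForm C P x y :=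
  (dvd_mul_left _ _).mul_right _

theorem not_sq_dvd_twistForm {C P x y p : ℤ} (hp : Prime p) (hC : ¬ p ∣ C) (hx : ¬ p ∣ x)
    (hxy : p ∣ x + y) (hxy2 : ¬ p ^ 2 ∣ x + y) : ¬ p ^ 2 ∣ twistForm C P x y := by
  have hy : ¬ p ∣ y := fun h => hx ((dvd_add_left h).1 hxy)
  have hcofactor : ¬ p ∣ C * (P * (x + y) ^ 2 - C ^ 2 * x * y) := by
    rw [hp.dvd_mul, dvd_sub_right (dvd_mul_of_dvd_right (dvd_pow hxy two_ne_zero) P), hp.dvd_mul,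
      hp.dvd_mul, hp.dvd_pow_iff_dvd two_ne_zero]
    tauto
  rw [twistForm, mul_right_comm]
  exact fun h => hxy2 (hp.pow_dvd_of_dvd_mul_left 2 hcofactor h)

theorem padicValInt_eq_of_pow_dvd_sub {p N : ℕ} [Fact p.Prime] {x y : ℤ}
    (hxy : (p : ℤ) ^ N ∣ x - y) (hy : ¬ (p : ℤ) ^ N ∣ y) : padicValInt p x = padicValInt p y := by
  have hx : ¬ (p : ℤ) ^ N ∣ x := fun h => hy ((dvd_sub_right h).1 hxy)
  have hiff : ∀ i < N, (p : ℤ) ^ i ∣ x ↔ (p : ℤ) ^ i ∣ y := fun i hi =>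
    (dvd_iff_dvd_of_dvd_sub ((pow_dvd_pow _ hi.le).trans hxy))
  rw [padicValInt_dvd_iff, not_or, not_le] at hx hy
  apply le_antisymm
  · exact (((padicValInt_dvd_iff _ y).1 ((hiff _ hx.2).1 (padicValInt_dvd x))).resolve_left hy.1)
  · exact (((padicValInt_dvd_iff _ x).1 ((hiff _ hy.2).2 (padicValInt_dvd y))).resolve_left hx.1)

theorem even_padicValInt_twistForm {C P x l b : ℤ} {p N : ℕ} [Fact p.Prime]
    (hx : (p : ℤ) ^ N ∣ x) (hN : ¬ (p : ℤ) ^ N ∣ C * P * l ^ 3) (hb : ¬ (p : ℤ) ∣ b)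
    (heven : Even (padicValInt p (C * P * l))) :
    Even (padicValInt p (twistForm C P x (l * b ^ 2))) := by
  have hsq : C * P * (l * b ^ 2) ^ 3 = C * P * l * ((l * b ^ 3) * (l * b ^ 3)) := by ring
  have hp : Prime (p : ℤ) := Nat.prime_iff_prime_int.1 Fact.out
  have hN' : ¬ (p : ℤ) ^ N ∣ C * P * (l * b ^ 2) ^ 3 := by
    rw [mul_pow, ← mul_assoc]
    refine fun h => hN (hp.pow_dvd_of_dvd_mul_right N (fun h' => ?_) h)
    exact hb (hp.dvd_of_dvd_pow (hp.dvd_of_dvd_pow h'))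
  rw [padicValInt_eq_of_pow_dvd_sub (hx.trans (dvd_twistForm_sub C P x _)) hN', hsq]
  have h0 : C * P * l * ((l * b ^ 3) * (l * b ^ 3)) ≠ 0 := by
    rw [← hsq]
    intro h
    simp [h] at hN'
  have h1 := right_ne_zero_of_mul h0
  rw [padicValInt.mul (left_ne_zero_of_mul h0) h1, padicValInt.mul (left_ne_zero_of_mul h1)
    (right_ne_zero_of_mul h1)]
  exact heven.add (Even.add_self _)

theorem padicValNat_eq_one_of_squarefree {p n : ℕ} [Fact p.Prime] (hn : Squarefree n)
    (hpn : p ∣ n) : padicValNat p n = 1 := by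
  rw [← Nat.factorization_def n Fact.out, Nat.factorization_eq_one_of_squarefree hn Fact.out hpn]

theorem even_padicValInt_mul_of_not_even {c : ℤ} (hc : c ≠ 0) {k l p : ℕ} [Fact p.Prime]
    (hkl : Squarefree (k * l)) (hp : p ∣ k * l) (h : ¬ Even (padicValInt p (c * l))) :
    Even (padicValInt p (c * k)) := by
  have hk : k ≠ 0 := left_ne_zero_of_mul hkl.ne_zero
  have hl : l ≠ 0 := right_ne_zero_of_mul hkl.ne_zero
  have hadd : padicValNat p k + padicValNat p l = 1 := by
    rw [← padicValNat.mul hk hl, padicValNat_eq_one_of_squarefree hkl hp]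
  rw [padicValInt.mul hc (by exact_mod_cast hl), padicValInt.of_nat] at h
  rw [padicValInt.mul hc (by exact_mod_cast hk), padicValInt.of_nat]
  grind

theorem exists_pos_forall_prime_dvd_iff {n : ℕ} (hn : n ≠ 0) (c : ℕ → Prop) :
    ∃ S : ℕ, 0 < S ∧ ∀ p : ℕ, p.Prime → p ∣ n → (p ∣ S ↔ c p) := by
  classical
  have hprime : ∀ q ∈ n.primeFactors.filter c, q.Prime := fun q hq =>
    Nat.prime_of_mem_primeFactors (Finset.mem_of_mem_filter q hq)
  have hpos : 0 < ∏ q ∈ n.primeFactors with c q, q := Finset.prod_pos fun q hq => (hprime q hq).pos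
  refine ⟨_, hpos, fun p hp hpn => ?_⟩
  rw [← (Nat.mem_primeFactors_of_ne_zero hpos.ne').trans (and_iff_right hp),
    Nat.primeFactors_prod hprime, Finset.mem_filter]
  exact and_iff_right (Nat.mem_primeFactors.2 ⟨hp, hpn, hn⟩)

theorem exists_forall_prime_not_pow_dvd {c : ℤ} (hc : c ≠ 0) :
    ∃ N : ℕ, ∀ p : ℕ, p.Prime → ¬ (p : ℤ) ^ N ∣ c := by
  refine ⟨c.natAbs, fun p hp h => ?_⟩
  have hle : p ^ c.natAbs ≤ c.natAbs := Nat.le_of_dvd (Int.natAbs_pos.2 hc)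
    (Int.natCast_dvd.1 (by exact_mod_cast h))
  exact hle.not_gt (Nat.lt_pow_self hp.one_lt)

theorem exists_forall_even_padicValInt_twistForm {C P : ℤ} (hC : C ≠ 0) (hP : P ≠ 0) {k l : ℕ}
    (hkl : Squarefree (k * l)) :
    ∃ a b : ℕ, 0 < a ∧ 0 < b ∧ ∀ v : ℕ, v.Coprime (k * l) → ∀ p : ℕ, p.Prime → p ∣ k * l →
      Even (padicValInt p (twistForm C P (k * a ^ 2) (l * (b * v) ^ 2))) := by
  have hk : k ≠ 0 := left_ne_zero_of_mul hkl.ne_zero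
  have hl : l ≠ 0 := right_ne_zero_of_mul hkl.ne_zero
  -- `p` divides exactly one of `k` and `l`, so one of `C * P * k` and `C * P * l` has even
  -- valuation; these decide the valuation of `twistForm C P x y` when `y`, resp. `x`, is
  -- highly divisible by `p`.
  obtain ⟨N, hN⟩ := exists_forall_prime_not_pow_dvd
    (by positivity : C * P * k ^ 3 * l ^ 3 ≠ 0)
  let good (p : ℕ) : Prop := Even (padicValInt p (C * P * l))
  obtain ⟨a, ha, hdvd_a⟩ := exists_pos_forall_prime_dvd_iff hkl.ne_zero good
  obtain ⟨b, hb, hdvd_b⟩ := exists_pos_forall_prime_dvd_iff hkl.ne_zero fun p => ¬ good p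
  refine ⟨a ^ N, b ^ N, pow_pos ha N, pow_pos hb N, fun v hv p hp hpkl => ?_⟩
  have : Fact p.Prime := ⟨hp⟩
  have hpow {S : ℕ} (hS : p ∣ S) : (p : ℤ) ^ N ∣ ((S ^ N : ℕ) : ℤ) := by
    exact_mod_cast pow_dvd_pow_of_dvd hS N
  specialize hdvd_a p hp hpkl
  specialize hdvd_b p hp hpkl
  by_cases hgood : good p
  · have hbv : ¬ p ∣ b ^ N * v := by
      rw [hp.dvd_mul]
      rintro (h | h)
      · exact hdvd_b.1 (hp.dvd_of_dvd_pow h) hgood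
      · exact Nat.not_coprime_of_dvd_of_dvd hp.one_lt h hpkl hv
    exact even_padicValInt_twistForm
      (((hpow (hdvd_a.2 hgood)).pow two_ne_zero).mul_left _)
      (fun h => hN p hp (h.trans ⟨k ^ 3, by ring⟩)) (by exact_mod_cast hbv) hgood
  · have ha' : ¬ p ∣ a ^ N := fun h => hgood (hdvd_a.1 (hp.dvd_of_dvd_pow h))
    rw [twistForm_comm]
    exact even_padicValInt_twistForm
      ((((hpow (hdvd_b.2 hgood)).mul_right _).pow two_ne_zero).mul_left _)
      (fun h => hN p hp (h.trans ⟨l ^ 3, by ring⟩)) (by exact_mod_cast ha')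
      (even_padicValInt_mul_of_not_even (mul_ne_zero hC hP) hkl hpkl hgood)

theorem exists_prime_gt_dvd_add_mul_sq (A : ℕ) {B M : ℕ} (hB : 0 < B) (hM : 0 < M) (n : ℕ) :
    ∃ p v : ℕ, p.Prime ∧ n < p ∧ n ≤ v ∧ v.Coprime M ∧ p ∣ A + B * v ^ 2 := by
  let c := B * M * (2 + M * ((A + B) * n.factorial))
  -- `v` is chosen so that `A + B * v ^ 2` is `A + B` times a number congruent to `1` modulo `n !`.
  let v := 1 + M * ((A + B) * n.factorial)
  have hform : A + B * v ^ 2 = (A + B) * (n.factorial * c + 1) := by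
    simp only [v, c]
    ring
  obtain ⟨p, hp, hpc⟩ := Nat.exists_prime_and_dvd (n := n.factorial * c + 1) (by
    have : 0 < n.factorial * c := by positivity
    lia)
  refine ⟨p, v, hp, ?_, ?_, by simp [v], hform ▸ hpc.mul_left _⟩
  · by_contra! hpn
    exact hp.one_lt.ne' (Nat.dvd_one.1
      ((Nat.dvd_add_right ((hp.dvd_factorial.2 hpn).mul_right c)).1 hpc))
  · calc n ≤ n.factorial := n.self_le_factorial
      _ ≤ M * (A + B) * n.factorial := Nat.le_mul_of_pos_left _ (by positivity)
      _ ≤ v := by simp only [v]; lia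

theorem exists_prime_gt_dvd_not_sq_dvd_add_mul_sq {A B M : ℕ} (hA : 0 < A) (hB : 0 < B)
    (hM : 0 < M) (n : ℕ) : ∃ p v : ℕ, p.Prime ∧ n < p ∧ n ≤ v ∧ v.Coprime M ∧
      p ∣ A + B * v ^ 2 ∧ ¬ p ^ 2 ∣ A + B * v ^ 2 := by
  obtain ⟨p, v, hp, hnp, hnv, hvM, hpv⟩ :=
    exists_prime_gt_dvd_add_mul_sq A hB hM (n + A + B + M + 2)
  by_cases hsq : p ^ 2 ∣ A + B * v ^ 2
  swap
  · exact ⟨p, v, hp, by lia, by lia, hvM, hpv, hsq⟩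
  have hvp : ¬ p ∣ v := fun h =>
    Nat.not_dvd_of_pos_of_lt hA (by lia)
      ((Nat.dvd_add_left ((dvd_pow h two_ne_zero).mul_left B)).1 hpv)
  -- Replacing `v` by `v + M * p` changes the value by `2 * B * M * v * p` modulo `p ^ 2`.
  have hshift : A + B * (v + M * p) ^ 2 =
      A + B * v ^ 2 + p ^ 2 * (B * M ^ 2) + p * (2 * B * M * v) := by ring
  refine ⟨p, v + M * p, hp, by lia, by lia, by simpa using hvM, ?_, fun h => ?_⟩
  · rw [hshift]
    exact (hpv.add ((dvd_pow_self p two_ne_zero).mul_right _)).add (dvd_mul_right p _)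
  · rw [hshift, Nat.dvd_add_right (hsq.add (dvd_mul_right _ _)), pow_two] at h
    have h' := Nat.dvd_of_mul_dvd_mul_left hp.pos h
    have hp2 : ¬ p ∣ 2 := Nat.not_dvd_of_pos_of_lt two_pos (by lia)
    have hpB : ¬ p ∣ B := Nat.not_dvd_of_pos_of_lt hB (by lia)
    have hpM : ¬ p ∣ M := Nat.not_dvd_of_pos_of_lt hM (by lia)
    simp only [hp.dvd_mul, hp2, hpB, hpM, hvp, or_self] at h'

theorem exists_prime_gt_dvd_not_sq_dvd_twistForm {C P : ℤ} (hC : 0 < C) (hP : 0 < P) {k l : ℕ}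
    (hkl : Squarefree (k * l)) (n : ℕ) :
    ∃ a b p : ℕ, a ≠ 0 ∧ b ≠ 0 ∧ p.Prime ∧ n < p ∧ 0 < twistForm C P (k * a ^ 2) (l * b ^ 2) ∧
      (p : ℤ) ∣ twistForm C P (k * a ^ 2) (l * b ^ 2) ∧
      ¬ (p : ℤ) ^ 2 ∣ twistForm C P (k * a ^ 2) (l * b ^ 2) ∧
      ∀ q : ℕ, q.Prime → q ∣ k * l →
        Even (padicValInt q (twistForm C P (k * a ^ 2) (l * b ^ 2))) := by
  have hk : 0 < k := Nat.pos_of_ne_zero (left_ne_zero_of_mul hkl.ne_zero)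
  have hl : 0 < l := Nat.pos_of_ne_zero (right_ne_zero_of_mul hkl.ne_zero)
  obtain ⟨a, b, ha, hb, heven⟩ := exists_forall_even_padicValInt_twistForm hC.ne' hP.ne' hkl
  lift C to ℕ using hC.le
  norm_cast at hC
  have hka : 0 < k * a ^ 2 := by positivity
  have hlb : 0 < l * b ^ 2 := by positivity
  obtain ⟨p, v, hp, hnp, hnv, hv, hpd, hpd2⟩ := exists_prime_gt_dvd_not_sq_dvd_add_mul_sq
    hka hlb (Nat.mul_pos hk hl) (n + C + k * a ^ 2 + C ^ 2 * (k * a ^ 2) + 1)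
  have hv0 : v ≠ 0 := by lia
  have hsum : ((k * a ^ 2 + l * b ^ 2 * v ^ 2 : ℕ) : ℤ) =
      k * a ^ 2 + l * ((b * v : ℕ) : ℤ) ^ 2 := by
    push_cast
    ring
  have hlarge : (C : ℤ) ^ 2 * (k * a ^ 2) ≤ P * (l * ((b * v : ℕ) : ℤ) ^ 2) := calc
    (C : ℤ) ^ 2 * (k * a ^ 2) ≤ v := by exact_mod_cast (by lia : C ^ 2 * (k * a ^ 2) ≤ v)
    _ ≤ (l * b ^ 2) * v * v := by
      exact_mod_cast Nat.le_mul_of_pos_left v (by positivity : 0 < l * b ^ 2 * v)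
    _ = l * ((b * v : ℕ) : ℤ) ^ 2 := by push_cast; ring
    _ ≤ P * (l * ((b * v : ℕ) : ℤ) ^ 2) := le_mul_of_one_le_left (by positivity) hP
  have hpC : ¬ (p : ℤ) ∣ C := by exact_mod_cast Nat.not_dvd_of_pos_of_lt hC (by lia)
  have hpka : ¬ (p : ℤ) ∣ k * a ^ 2 := by exact_mod_cast Nat.not_dvd_of_pos_of_lt hka (by lia)
  have hpsum : (p : ℤ) ∣ k * a ^ 2 + l * ((b * v : ℕ) : ℤ) ^ 2 := by
    rw [← hsum]
    exact_mod_cast hpd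
  have hpsum2 : ¬ (p : ℤ) ^ 2 ∣ k * a ^ 2 + l * ((b * v : ℕ) : ℤ) ^ 2 := by
    rw [← hsum]
    exact_mod_cast hpd2
  refine ⟨a, b * v, p, ha.ne', mul_ne_zero hb.ne' hv0, hp, by lia,
    twistForm_pos (by exact_mod_cast hC) hP (by exact_mod_cast hka) (by positivity) hlarge,
    hpsum.trans (add_dvd_twistForm _ _ _ _),
    not_sq_dvd_twistForm (Nat.prime_iff_prime_int.1 hp) hpC hpka hpsum hpsum2, ?_⟩
  exact_mod_cast heven v hv

theorem not_dvd_of_even_padicValNat_sq_mul {p m T : ℕ} [Fact p.Prime] (hT : Squarefree T)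
    (hm : m ≠ 0) (h : Even (padicValNat p (m ^ 2 * T))) : ¬ p ∣ T := by
  intro hpT
  rw [padicValNat.mul (pow_ne_zero 2 hm) hT.ne_zero, padicValNat.pow,
    padicValNat_eq_one_of_squarefree hT hpT] at h
  grind

theorem exists_squarefree_gt_twistForm_eq_sq_mul {C P : ℤ} (hC : 0 < C) (hP : 0 < P) {k l : ℕ}
    (hkl : Squarefree (k * l)) (n : ℕ) :
    ∃ T a b m : ℕ, n < T ∧ Squarefree T ∧ T.Coprime (k * l) ∧ a ≠ 0 ∧ b ≠ 0 ∧ m ≠ 0 ∧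
      twistForm C P (k * a ^ 2) (l * b ^ 2) = m ^ 2 * T := by
  obtain ⟨a, b, p, ha, hb, hp, hnp, hpos, hpD, hpD2, heven⟩ :=
    exists_prime_gt_dvd_not_sq_dvd_twistForm hC hP hkl n
  obtain ⟨D, hD⟩ := Int.eq_ofNat_of_zero_le hpos.le
  obtain ⟨T, m, rfl, hT⟩ := Nat.sq_mul_squarefree D
  have hm : m ≠ 0 := by
    rintro rfl
    simp [hD] at hpos
  rw [hD] at hpD hpD2
  norm_cast at hpD hpD2
  have hpT : p ∣ T := (hp.dvd_mul.1 hpD).resolve_left fun h =>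
    hpD2 ((pow_dvd_pow_of_dvd (hp.dvd_of_dvd_pow h) 2).mul_right T)
  refine ⟨T, a, b, m, hnp.trans_le (Nat.le_of_dvd hT.ne_zero.bot_lt hpT), hT,
    Nat.coprime_of_dvd fun q hq hqT hqkl => ?_, ha, hb, hm, by exact_mod_cast hD⟩
  have : Fact q.Prime := ⟨hq⟩
  have hevenT := heven q hq hqkl
  rw [hD, padicValInt.of_nat] at hevenT
  exact not_dvd_of_even_padicValNat_sq_mul hT hm hevenT hqT

theorem exists_squarefree_gt_isThetaCongruent_mul {r s : ℤ} (hs : |s| < r) {k l : ℕ}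
    (hkl : Squarefree (k * l)) (n : ℕ) :
    ∃ T : ℕ, n < T ∧ Squarefree T ∧ T.Coprime (k * l) ∧
      IsThetaCongruent r s (k * T) ∧ IsThetaCongruent r s (l * T) := by
  have hr : 0 < r := (abs_nonneg s).trans_lt hs
  have hrs : 0 < r + s := by linarith [neg_lt_of_abs_lt hs]
  obtain ⟨T, a, b, m, hnT, hT, hcop, ha, hb, hm, heq⟩ := exists_squarefree_gt_twistForm_eq_sq_mul
    (by linarith : 0 < 3 * r + s) (by positivity : 0 < 2 * r * (r + s)) hkl n
  have hkT : k * T ≠ 0 := mul_ne_zero (left_ne_zero_of_mul hkl.ne_zero) hT.ne_zero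
  have hlT : l * T ≠ 0 := mul_ne_zero (right_ne_zero_of_mul hkl.ne_zero) hT.ne_zero
  refine ⟨T, hnT, hT, hcop, ?_, ?_⟩
  · refine isThetaCongruent_of_mul_sq_eq_mul_twistForm hs hkT (x := k * a ^ 2) (y := l * b ^ 2)
      (m := a * m) (by positivity) ?_
    rw [heq]
    push_cast
    ring
  · refine isThetaCongruent_of_mul_sq_eq_mul_twistForm hs hlT (x := l * b ^ 2) (y := k * a ^ 2)
      (m := b * m) (by positivity) ?_
    rw [twistForm_comm, heq]
    push_cast
    ring

theorem abs_lt_of_cos_eq_div {θ : ℝ} (hθ0 : 0 < θ) (hθπ : θ < Real.pi) {r s : ℤ} (hr : 0 < r)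
    (hcos : Real.cos θ = s / r) : |s| < r := by
  have hr' : (0 : ℝ) < r := by exact_mod_cast hr
  have hlt : Real.cos θ < 1 := by
    simpa using Real.cos_lt_cos_of_nonneg_of_le_pi le_rfl hθπ.le hθ0
  have hgt : -1 < Real.cos θ := by
    simpa using Real.cos_lt_cos_of_nonneg_of_le_pi hθ0.le le_rfl hθπ
  rw [hcos, div_lt_one hr'] at hlt
  rw [hcos, lt_div_iff₀ hr', neg_one_mul] at hgt
  exact abs_lt.2 ⟨by exact_mod_cast hgt, by exact_mod_cast hlt⟩

theorem ratio_of_theta_congruent_numbers_general {r s : ℤ} (hs : |s| < r) {k l : ℕ}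
    (hk : Squarefree k) (hl : Squarefree l) :
    {p : ℕ × ℕ | 0 < p.1 ∧ 0 < p.2 ∧ Squarefree p.1 ∧ Squarefree p.2 ∧
      IsThetaCongruent r s p.1 ∧ IsThetaCongruent r s p.2 ∧
      l * p.2 = k * p.1}.Infinite := by
  obtain ⟨k', l', hcop, hkg, hlg⟩ := Nat.exists_coprime k l
  have hk' : Squarefree k' := hk.squarefree_of_dvd (hkg ▸ dvd_mul_right _ _)
  have hl' : Squarefree l' := hl.squarefree_of_dvd (hlg ▸ dvd_mul_right _ _)
  refine Set.Infinite.of_image Prod.fst (Set.infinite_of_forall_exists_gt fun n => ?_)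
  obtain ⟨T, hnT, hT, hTcop, hkT, hlT⟩ := exists_squarefree_gt_isThetaCongruent_mul hs
    ((Nat.squarefree_mul hcop).2 ⟨hk', hl'⟩) n
  have hsqk : Squarefree (k' * T) :=
    (Nat.squarefree_mul hTcop.coprime_mul_right_right.symm).2 ⟨hk', hT⟩
  have hsql : Squarefree (l' * T) :=
    (Nat.squarefree_mul hTcop.coprime_mul_left_right.symm).2 ⟨hl', hT⟩
  have hratio : l * (k' * T) = k * (l' * T) := by
    generalize k.gcd l = g at hkg hlg
    rw [hkg, hlg]
    ring
  exact ⟨l' * T, ⟨(l' * T, k' * T),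
    ⟨hsql.ne_zero.bot_lt, hsqk.ne_zero.bot_lt, hsql, hsqk, hlT, hkT, hratio⟩, rfl⟩,
    hnT.trans_le (Nat.le_mul_of_pos_left T hl'.ne_zero.bot_lt)⟩

/-- For `θ ∈ (0, π)` with `cos θ = s / r ∈ ℚ` and `k, l` positive squarefree coprime
integers, there exist infinitely many pairs `(M, N)` of `θ`-congruent numbers with
`l * N = k * M`. -/
theorem ratio_of_theta_congruent_numbers
    (θ : ℝ) (hθ0 : 0 < θ) (hθπ : θ < Real.pi)
    (r s : ℤ) (hr : 0 < r) (hrs : Int.gcd s r = 1)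
    (hcos : Real.cos θ = (s : ℝ) / (r : ℝ))
    (k l : ℕ) (hk : 0 < k) (hl : 0 < l)
    (hksf : Squarefree k) (hlsf : Squarefree l) (hkl : Nat.Coprime k l) :
    {p : ℕ × ℕ | 0 < p.1 ∧ 0 < p.2 ∧ Squarefree p.1 ∧ Squarefree p.2 ∧
      IsThetaCongruent r s p.1 ∧ IsThetaCongruent r s p.2 ∧
      l * p.2 = k * p.1}.Infinite := by
  exact ratio_of_theta_congruent_numbers_general (abs_lt_of_cos_eq_div hθ0 hθπ hr hcos) hksf hlsf
end

section
/- Let β ∈ ℚ with β ≠ 1 and β ≠ −1, and let k, l be distinct positive coprime integers. Then the generalized Holm curve H_β has infinitely many rational points: the set {(x, y) ∈ ℚ × ℚ : l·x·(x+β−1)·(x+β+1) = k·y·(y+β−1)·(y+β+1)} is infinite. -/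
/-!
Let `A` be a valuation ring whose maximal ideal is generated by `2` and whose residue field has two
elements. Among three distinct points of its fraction field, two are closer to each other than to
the third: after a permutation of the roots `p, q, r` of the cubic `f`, `q - p = a (r - p)` with
`a ∈ A` even. The substitution `x = p + (r - p) (1 + t X)`, `y = p + (r - p) Y` then turns
`f(x) = t f(y)` into `X (1 + t X) (1 - a + t X) = Y (Y - 1) (Y - a)`, a plane cubic over `A`.

Take `(0, 0)` as the origin of the group law; `Y` is a local parameter there. As on a formal group,
doubling a point close to the origin multiplies its parameter by `2` up to a unit. Hence the points
`2ⁿ • (0, a)` have `Y`-coordinates associated to `2ⁿ a` and are pairwise distinct.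
-/

section Odd

variable {R : Type*} [CommRing R] [IsLocalRing R]

lemma isUnit_of_odd (h2 : ¬ IsUnit (2 : R)) {u : R} (hu : Odd u) : IsUnit u := by
  obtain ⟨v, rfl⟩ := hu
  have hsum : (2 * v + 1) + 2 * -v = 1 := by ring
  exact (IsLocalRing.isUnit_or_isUnit_of_add_one hsum).resolve_right
    fun h => h2 (isUnit_of_mul_isUnit_left h)

/-- Division by an odd element preserves residue classes modulo `2`. -/
lemma exists_mul_add_two_mul_eq (h2 : ¬ IsUnit (2 : R)) {d : R} (hd : Odd d) (n : R) :
    ∃ m, d * (n + 2 * m) = n := by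
  obtain ⟨i, hi⟩ := (isUnit_of_odd h2 hd).exists_right_inv
  obtain ⟨e, rfl⟩ := hd
  exact ⟨-(e * i * n), by linear_combination (-2 * e * n) * hi⟩

end Odd

/-- The point `(X, Y)` lies on the integral model of the curve `f(x) = t f(y)`, where `f` is the
monic cubic with roots `0`, `a`, `1`. The coordinates are `x = 1 + t X` and `y = Y`, so that the
base point `(0, 0)` is the point `(1, 0)` of the curve, and a factor `t` has been divided out. -/
def OnIntegralModel {R : Type*} [CommRing R] (t a X Y : R) : Prop :=
  X * (1 + t * X) * (1 - a + t * X) = Y * (Y - 1) * (Y - a)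

/-- The tangent line at the point `(X, Y)` of the integral model has the slope `μ = dX / dY`, stated
without division. -/
def IsTangentSlope {R : Type*} [CommRing R] (t a X Y μ : R) : Prop :=
  (1 - a + 2 * t * (2 - a) * X + 3 * t ^ 2 * X ^ 2) * μ = 3 * Y ^ 2 - 2 * (1 + a) * Y + a

namespace OnIntegralModel

section CommRing

variable {R : Type*} [CommRing R] {t a X Y : R}

lemma odd_tangent_denominator (t : R) (ha : Even a) (hX : Even X) :
    Odd (1 - a + 2 * t * (2 - a) * X + 3 * t ^ 2 * X ^ 2) := by
  obtain ⟨b, hb⟩ := ha.two_dvd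
  obtain ⟨x, hx⟩ := hX.two_dvd
  exact ⟨-b + t * (2 - a) * X + 3 * t ^ 2 * X * x, by
    linear_combination -hb + 3 * t ^ 2 * X * hx⟩

lemma tangent_third_point {μ s : R} (h : OnIntegralModel t a X Y)
    (hμ : IsTangentSlope t a X Y μ)
    (hs : (t ^ 2 * μ ^ 3 - 1) * s =
      3 * Y - (1 + a) - μ ^ 2 * (t * (2 - a) + 3 * t ^ 2 * X)) :
    OnIntegralModel t a (X + μ * s) (Y + s) := by
  unfold OnIntegralModel IsTangentSlope at *
  linear_combination h + s * hμ + s ^ 2 * hs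

lemma chord_third_point {ν z : R} (h : OnIntegralModel t a (ν * Y) Y) (hY : IsLeftRegular Y)
    (hz : (1 - t ^ 2 * ν ^ 3) * (Y * z) = a - (1 - a) * ν) :
    OnIntegralModel t a (ν * z) z := by
  unfold OnIntegralModel at *
  -- On the line `X = ν Y` the cubic is `Y` times a quadratic, with roots `Y` and `z`.
  have hsum : (1 - t ^ 2 * ν ^ 3) * (Y + z) = 1 + a + t * (2 - a) * ν ^ 2 :=
    hY <| hY <| by linear_combination Y * hz - h
  have hroot : (1 - t ^ 2 * ν ^ 3) * z ^ 2 - (1 + a + t * (2 - a) * ν ^ 2) * z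
      + (a - (1 - a) * ν) = 0 := by
    linear_combination z * hsum - hz
  linear_combination -z * hroot

end CommRing

section IsLocalRing

variable {R : Type*} [CommRing R] [IsLocalRing R] {t a X Y : R}

lemma exists_odd_tangent_step (h2 : ¬ IsUnit (2 : R)) (h : OnIntegralModel t a X Y) (ha : Even a)
    (hX : Even X) (hY : Even Y) :
    ∃ m s : R, Odd s ∧ IsTangentSlope t a X Y (2 * m) ∧
      OnIntegralModel t a (X + 2 * m * s) (Y + s) := by
  obtain ⟨b, hb⟩ := ha.two_dvd
  obtain ⟨y, hy⟩ := hY.two_dvd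
  obtain ⟨e, he⟩ := exists_mul_add_two_mul_eq h2 (odd_tangent_denominator t ha hX)
    (3 * Y * y - (1 + a) * Y + b)
  set m := 3 * Y * y - (1 + a) * Y + b + 2 * e
  have hslope : IsTangentSlope t a X Y (2 * m) := by
    unfold IsTangentSlope
    linear_combination 2 * he - 3 * Y * hy - hb
  have hnum : Odd (3 * Y - (1 + a) - (2 * m) ^ 2 * (t * (2 - a) + 3 * t ^ 2 * X)) :=
    ⟨3 * y - 1 - b - 2 * m ^ 2 * (t * (2 - a) + 3 * t ^ 2 * X), by
      linear_combination 3 * hy - hb⟩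
  obtain ⟨e', he'⟩ := exists_mul_add_two_mul_eq h2
    (d := t ^ 2 * (2 * m) ^ 3 - 1) ⟨4 * t ^ 2 * m ^ 3 - 1, by ring⟩
    (3 * Y - (1 + a) - (2 * m) ^ 2 * (t * (2 - a) + 3 * t ^ 2 * X))
  exact ⟨m, _, hnum.add_even (even_two_mul e'), hslope, h.tangent_third_point hslope he'⟩

/-- The linear form `a Y - (1 - a) X` defines the tangent line at `(0, 0)`. -/
lemma exists_associated_chord (h2 : ¬ IsUnit (2 : R)) (h : OnIntegralModel t a X Y) (hX : Even X)
    (hY : Odd Y) :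
    ∃ ν z, Associated (a * Y - (1 - a) * X) z ∧ OnIntegralModel t a (2 * ν * z) z := by
  obtain ⟨x, rfl⟩ := hX
  obtain ⟨i, hi⟩ := (isUnit_of_odd h2 hY).exists_right_inv
  have hslope : 2 * (x * i) * Y = x + x := by linear_combination 2 * x * hi
  have hc : Odd (1 - t ^ 2 * (2 * (x * i)) ^ 3) := ⟨-4 * t ^ 2 * (x * i) ^ 3, by ring⟩
  obtain ⟨j, hj⟩ := (isUnit_of_odd h2 hc).exists_right_inv
  refine ⟨x * i, (a * Y - (1 - a) * (x + x)) * (i ^ 2 * j), ?_, ?_⟩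
  · exact associated_mul_unit_right _ _ (((IsUnit.of_mul_eq_one_right _ hi).pow 2).mul
      (IsUnit.of_mul_eq_one_right _ hj))
  · rw [← hslope] at h ⊢
    refine h.chord_third_point (isUnit_of_odd h2 hY).isRegular.left ?_
    linear_combination (a - (1 - a) * (2 * (x * i))) * ((Y * i) ^ 2 * hj + (Y * i + 1) * hi)

/-- The tangent line at `(0, 0)` has slope `a / (1 - a)` with respect to `Y`, so `a - (1 - a) μ`
measures how far the tangent line at `(2 ν Y, Y)` is from being parallel to it. -/
lemma exists_slope_defect_eq (h2 : ¬ IsUnit (2 : R)) {ν μ y : R} (ha : Even a) (hY : Y = 2 * y)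
    (hμ : IsTangentSlope t a (2 * ν * Y) Y μ) :
    ∃ e, a - (1 - a) * μ = 2 * Y * (1 + y + 2 * e) := by
  have hd := odd_tangent_denominator t ha (X := 2 * ν * Y) ⟨ν * Y, by ring⟩
  obtain ⟨b, hb⟩ := ha.two_dvd
  obtain ⟨e, he⟩ := exists_mul_add_two_mul_eq h2 hd
    ((1 - a) * (1 + a - 3 * y) + 2 * a * t * ν * (2 - a + 3 * t * ν * Y))
  refine ⟨e - a * b - 2 * y + 3 * b * y + a * t * ν * (2 - a + 3 * t * ν * Y), ?_⟩
  refine (isUnit_of_odd h2 hd).mul_left_cancel ?_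
  unfold IsTangentSlope at hμ
  subst hY hb
  linear_combination -(1 - 2 * b) * hμ - 4 * y * he

lemma exists_double (h2 : ¬ IsUnit (2 : R)) {ν : R} (h : OnIntegralModel t a (2 * ν * Y) Y)
    (ha : Even a) (hY : Even Y) :
    ∃ ν' Y', Associated (2 * Y) Y' ∧ OnIntegralModel t a (2 * ν' * Y') Y' := by
  obtain ⟨m, s, hs, hm, htan⟩ := h.exists_odd_tangent_step h2 ha ⟨ν * Y, by ring⟩ hY
  obtain ⟨ν', Y', hY', h'⟩ := htan.exists_associated_chord h2 ⟨ν * Y + m * s, by ring⟩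
    (hY.add_odd hs)
  refine ⟨ν', Y', .trans ?_ hY', h'⟩
  obtain ⟨y, hy⟩ := hY.two_dvd
  obtain ⟨b, hb⟩ := ha.two_dvd
  obtain ⟨σ, hσ⟩ := hs
  obtain ⟨e, he⟩ := exists_slope_defect_eq h2 ha hy hm
  obtain ⟨c, hc⟩ : ∃ c, a * Y - (1 - a) * (2 * ν * Y) = 2 * Y * (y + 2 * c) := by
    refine ⟨b * y - y ^ 2 + t * ν ^ 2 * Y * (2 - a + 2 * t * ν * Y), ?_⟩
    unfold OnIntegralModel at h
    subst hy hb
    linear_combination -h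
  have hdouble : a * (Y + s) - (1 - a) * (2 * ν * Y + 2 * m * s) =
      2 * Y * (y + 2 * c + s * (1 + y + 2 * e)) := by
    linear_combination hc + s * he
  -- Modulo `2` the point contributes `y` and the slope `1 + y`, so the cofactor is always odd.
  have hodd : Odd (y + 2 * c + s * (1 + y + 2 * e)) :=
    ⟨y + c + e + σ * (1 + y + 2 * e), by rw [hσ]; ring⟩
  rw [hdouble]
  exact associated_mul_unit_right _ _ (isUnit_of_odd h2 hodd)

lemma exists_associated_two_pow_mul (h2 : ¬ IsUnit (2 : R)) (t : R) (ha : Even a) (n : ℕ) :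
    ∃ ν Y, Associated (2 ^ n * a) Y ∧ OnIntegralModel t a (2 * ν * Y) Y := by
  induction n with
  | zero => exact ⟨0, a, by simp, by simp [OnIntegralModel]⟩
  | succ n ih =>
    obtain ⟨ν, Y, hY, h⟩ := ih
    have hYeven : Even Y := (ha.mul_left _).trans_dvd hY.dvd
    obtain ⟨ν', Y', hY', h'⟩ := h.exists_double h2 ha hYeven
    refine ⟨ν', Y', .trans ?_ hY', h'⟩
    rw [pow_succ', mul_assoc]
    exact hY.mul_left 2

lemma infinite_setOf_exists [IsDomain R] (h2 : ¬ IsUnit (2 : R)) (t : R) (ha : Even a)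
    (ha0 : a ≠ 0) : {Y | ∃ X, OnIntegralModel t a X Y}.Infinite := by
  have h20 : (2 : R) ≠ 0 := ne_zero_of_dvd_ne_zero ha0 ha.two_dvd
  choose ν Y hassoc hY using exists_associated_two_pow_mul h2 t ha
  have le_of_eq_ordinate {m n : ℕ} (hmn : Y m = Y n) : m ≤ n := by
    have hdvd : 2 ^ m * a ∣ 2 ^ n * a := ((hassoc m).trans (hmn ▸ (hassoc n).symm)).dvd
    exact (pow_dvd_pow_iff h20 h2).mp ((mul_dvd_mul_iff_right ha0).mp hdvd)
  exact Set.infinite_of_injective_forall_mem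
    (fun _ _ hmn => (le_of_eq_ordinate hmn).antisymm (le_of_eq_ordinate hmn.symm))
    fun n => ⟨_, hY n⟩

end IsLocalRing

end OnIntegralModel

/-- The monic cubic polynomial function with roots `p`, `q`, `r`. -/
def monicCubic {R : Type*} [CommRing R] (p q r x : R) : R :=
  (x - p) * (x - q) * (x - r)

lemma monicCubic_right_comm {R : Type*} [CommRing R] (p q r : R) :
    monicCubic p q r = monicCubic p r q :=
  funext fun _ => mul_right_comm _ _ _

lemma monicCubic_reverse {R : Type*} [CommRing R] (p q r : R) :
    monicCubic p q r = monicCubic r q p := by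
  ext x; unfold monicCubic; ring

section ValuationSubring

variable {K : Type*} [Field K] {A : ValuationSubring K} {p q r : K}

lemma infinite_ordinates_of_even_ratio (h2 : ¬ IsUnit (2 : A)) {a : A} (ha : Even a)
    (hpq : p ≠ q) (hq : q - p = a * (r - p)) (t : A) :
    {y | ∃ x, monicCubic p q r x = t * monicCubic p q r y}.Infinite := by
  have hr0 : r - p ≠ 0 := by
    intro h0
    rw [h0, mul_zero] at hq
    exact hpq (sub_eq_zero.mp hq).symm
  have ha0 : a ≠ 0 := by
    rintro rfl
    rw [ZeroMemClass.coe_zero, zero_mul] at hq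
    exact hpq (sub_eq_zero.mp hq).symm
  have hinj : Function.Injective fun Y : A => p + (r - p) * (Y : K) := fun _ _ h =>
    Subtype.ext (mul_left_cancel₀ hr0 (add_left_cancel h))
  refine ((OnIntegralModel.infinite_setOf_exists h2 t ha ha0).image hinj.injOn).mono ?_
  rintro _ ⟨Y, ⟨X, h⟩, rfl⟩
  refine ⟨p + (r - p) * (1 + t * X), ?_⟩
  have hK : (X : K) * (1 + t * X) * (1 - a + t * X) = Y * (Y - 1) * (Y - a) :=
    congrArg Subtype.val h
  obtain rfl : q = p + a * (r - p) := by linear_combination hq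
  unfold monicCubic
  linear_combination t * (r - p) ^ 3 * hK

lemma infinite_ordinates_of_integral_ratio (h2 : ¬ IsUnit (2 : A))
    (hA : ∀ a : A, Even a ∨ Odd a) (hpq : p ≠ q) (hqr : q ≠ r) {a : A}
    (hq : q - p = a * (r - p)) (t : A) :
    {y | ∃ x, monicCubic p q r x = t * monicCubic p q r y}.Infinite := by
  rcases hA a with ha | ha
  · exact infinite_ordinates_of_even_ratio h2 ha hpq hq t
  · rw [monicCubic_reverse]
    refine infinite_ordinates_of_even_ratio h2 (odd_one.sub_odd ha) hqr.symm ?_ t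
    push_cast
    linear_combination hq

lemma infinite_ordinates (h2 : ¬ IsUnit (2 : A)) (hA : ∀ a : A, Even a ∨ Odd a) (hpq : p ≠ q)
    (hpr : p ≠ r) (hqr : q ≠ r) (t : A) :
    {y | ∃ x, monicCubic p q r x = t * monicCubic p q r y}.Infinite := by
  rcases le_total (A.valuation (q - p)) (A.valuation (r - p)) with h | h
  · obtain ⟨a, ha⟩ := (A.valuation_le_iff _ _).mp h
    exact infinite_ordinates_of_integral_ratio h2 hA hpq hqr ha.symm t
  · obtain ⟨a, ha⟩ := (A.valuation_le_iff _ _).mp h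
    rw [monicCubic_right_comm]
    exact infinite_ordinates_of_integral_ratio h2 hA hpr hqr.symm ha.symm t

theorem holm_curve_infinitely_many_rational_points_general (h2 : ¬ IsUnit (2 : A))
    (hA : ∀ a : A, Even a ∨ Odd a) (hpq : p ≠ q) (hpr : p ≠ r) (hqr : q ≠ r) (k l : K) :
    {z : K × K | l * monicCubic p q r z.1 = k * monicCubic p q r z.2}.Infinite := by
  rcases le_total (A.valuation k) (A.valuation l) with h | h
  · obtain ⟨t, rfl⟩ := (A.valuation_le_iff _ _).mp h
    refine .of_image Prod.snd ((infinite_ordinates h2 hA hpq hpr hqr t).mono ?_)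
    rintro y ⟨x, hxy⟩
    have hmem : l * monicCubic p q r x = t * l * monicCubic p q r y := by
      linear_combination l * hxy
    exact ⟨(x, y), hmem, rfl⟩
  · obtain ⟨t, rfl⟩ := (A.valuation_le_iff _ _).mp h
    refine .of_image Prod.fst ((infinite_ordinates h2 hA hpq hpr hqr t).mono ?_)
    rintro x ⟨y, hyx⟩
    have hmem : t * k * monicCubic p q r x = k * monicCubic p q r y := by
      linear_combination -k * hyx
    exact ⟨(x, y), hmem, rfl⟩

end ValuationSubring

section TwoIntegral

/-- The localization of `ℤ` at `2`, as a valuation subring of its fraction field. -/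
def twoIntegral : ValuationSubring ℚ := (Rat.padicValuation 2).valuationSubring

lemma mem_twoIntegral {q : ℚ} : q ∈ twoIntegral ↔ ¬ 2 ∣ q.den :=
  (Valuation.mem_valuationSubring_iff _ _).trans Rat.padicValuation_le_one_iff

lemma not_isUnit_two_twoIntegral : ¬ IsUnit (2 : twoIntegral) := by
  intro h
  obtain ⟨v, hv⟩ := h.exists_right_inv
  have hv' : (v : ℚ) = 2⁻¹ := eq_inv_of_mul_eq_one_right (congrArg Subtype.val hv)
  have hden : ¬ 2 ∣ (2⁻¹ : ℚ).den := mem_twoIntegral.mp (hv' ▸ v.2)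
  norm_num at hden

lemma even_or_odd_twoIntegral (x : twoIntegral) : Even x ∨ Odd x := by
  have hden : Odd ((x : ℚ).den : twoIntegral) :=
    (Nat.not_even_iff_odd.mp fun h => mem_twoIntegral.mp x.2 h.two_dvd).natCast
  have hx : ((x : ℚ).den : twoIntegral) * x = (x : ℚ).num :=
    Subtype.ext (Rat.den_mul_eq_num _)
  obtain ⟨m, hm⟩ := exists_mul_add_two_mul_eq not_isUnit_two_twoIntegral hden
    ((x : ℚ).num : twoIntegral)
  have hx' : x = (x : ℚ).num + 2 * m :=
    (isUnit_of_odd not_isUnit_two_twoIntegral hden).mul_left_cancel (hx.trans hm.symm)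
  rw [hx']
  exact (Int.even_or_odd (x : ℚ).num).imp (fun h => h.intCast.add (even_two_mul m))
    fun h => h.intCast.add_even (even_two_mul m)

end TwoIntegral

/-- For `β ∈ ℚ` with `β ≠ ±1` and distinct positive coprime integers `k, l`, the
generalized Holm curve `H_β : l·x·(x+β−1)·(x+β+1) = k·y·(y+β−1)·(y+β+1)` has
infinitely many rational points. -/
theorem holm_curve_infinitely_many_rational_points (β : ℚ) (hβ1 : β ≠ 1) (hβ2 : β ≠ -1)
    (k l : ℕ) (hk : 0 < k) (hl : 0 < l) (hne : k ≠ l) (hkl : Nat.Coprime k l) :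
    {p : ℚ × ℚ | (l : ℚ) * p.1 * (p.1 + β - 1) * (p.1 + β + 1) =
      (k : ℚ) * p.2 * (p.2 + β - 1) * (p.2 + β + 1)}.Infinite := by
  have hcubic (x : ℚ) : monicCubic 0 (1 - β) (-1 - β) x = x * (x + β - 1) * (x + β + 1) := by
    unfold monicCubic; ring
  simpa only [hcubic, ← mul_assoc] using holm_curve_infinitely_many_rational_points_general
    not_isUnit_two_twoIntegral even_or_odd_twoIntegral (sub_ne_zero.mpr hβ1.symm).symm
    (sub_ne_zero.mpr hβ2.symm).symm (sub_left_injective.ne (by norm_num)) (k : ℚ) (l : ℚ)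
end

section
/- Let β ∈ ℚ with β ≠ 1 and β ≠ −1, and let k, l be distinct positive coprime integers. Then the Mordell–Weil group E_β(ℚ) has positive rank; that is, there exists a rational point P on the elliptic curve E_β : Y² = X³ − (1/3)·k²·l²·(3+β²)²·X + (1/27)·k²·l²·(2·k·l·β²·(β²−9)² + 27·k²·(β²−1)² + 27·l²·(β²−1)²) of infinite order: n·P ≠ O for every positive integer n, where the group law is the usual chord-and-tangent addition on the curve with identity the point at infinity O. -/
/-!
On a curve `y² = x³ + a₂ x² + a₄ x + a₆` doubling strictly enlarges the `2`-adic size of `x` as soon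
as `x` is large compared with the coefficients: then `|y|² = |x|³`, the tangent slope
`(3 x² + 2 a₂ x + a₄) / (2 y)` has square of size `4 |x|`, and this dominates the `x`-coordinate of
the double. So a point with small `x` and large tangent slope has infinite order, its double being
already large.

The Jacobian of `k f(x) = l f(y)` depends on the cubic `f` only through the differences of its
roots. Since the residue field is `𝔽₂`, the two of largest `2`-adic size may be taken to be `a` and
`b`, of equal size, and then `(a + b) / 2` is no larger than they are. By symmetry in `k` and `l`
one may also assume `|k| ≤ |l|`. In the model `y² = x² (x + t) + δ²` of the Jacobian one then has
`|t| ≤ |b l|²` and `|δ| ≤ |b l|³`, and an explicit rational point with `|x| = |b l|²`, of one shape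
if `|k| < |l|` and of another if `|k| = |l|`, has a tangent slope that is large enough.
-/

open WeierstrassCurve WeierstrassCurve.Affine

lemma not_isOfFinAddOrder_of_forall_lt_nsmul {G α : Type*} [AddMonoid G] [Preorder α]
    {f : G → α} {r : α} {m : ℕ} (hf : ∀ P, r < f P → f P < f (m • P)) {P : G} (hP : r < f P) :
    ¬IsOfFinAddOrder P := by
  have hgt (n : ℕ) : r < f (m ^ n • P) := by
    induction n with
    | zero => simpa using hP
    | succ n ih => exact ih.trans (by simpa only [pow_succ', mul_nsmul'] using hf _ ih)
  have hmono : StrictMono fun n : ℕ ↦ f (m ^ n • P) :=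
    strictMono_nat_of_lt_succ fun n ↦ by simpa only [pow_succ', mul_nsmul'] using hf _ (hgt n)
  have hinj : Function.Injective fun n : ℕ ↦ m ^ n • P := hmono.injective.of_comp (f := f)
  have hmem (n : ℕ) : m ^ n • P ∈ AddSubmonoid.multiples P := ⟨m ^ n, rfl⟩
  exact fun hfin ↦ Set.infinite_of_injective_forall_mem hinj hmem hfin.finite_multiples

section AbsoluteValue

variable {K : Type*} [Field K] {v : AbsoluteValue K ℝ} {ρ : ℝ} {x y a₂ a₄ a₆ : K}

lemma map_three_eq_one (hv : IsNonarchimedean v) (h2 : v 2 < 1) : v 3 = 1 := by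
  rw [← two_add_one_eq_three, hv.add_eq_right_of_lt (by simpa using h2), map_one]

lemma sq_map_eq_map_pow_three_of_lt (hv : IsNonarchimedean v) (ha₂ : v a₂ ≤ ρ)
    (ha₄ : v a₄ ≤ ρ ^ 2) (ha₆ : v a₆ ≤ ρ ^ 3) (hx : ρ < v x)
    (heq : y ^ 2 = x ^ 3 + a₂ * x ^ 2 + a₄ * x + a₆) : v y ^ 2 = v x ^ 3 := by
  have hρ : 0 ≤ ρ := (apply_nonneg v _).trans ha₂
  have h₂ : v (a₂ * x ^ 2) < v (x ^ 3) := by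
    rw [map_mul, map_pow, map_pow]
    nlinarith [pow_pos (hρ.trans_lt hx) 2]
  have h₄ : v (a₄ * x) < v (x ^ 3) := by
    rw [map_mul, map_pow]
    nlinarith [mul_self_lt_mul_self hρ hx]
  have h₆ : v a₆ < v (x ^ 3) := by
    rw [map_pow]
    exact ha₆.trans_lt (pow_lt_pow_left₀ hx hρ three_ne_zero)
  have hsum : v (x ^ 3 + a₂ * x ^ 2 + a₄ * x + a₆) = v (x ^ 3) := by
    have h := hv.add_eq_left_of_lt h₂
    have h' := hv.add_eq_left_of_lt (h₄.trans_eq h.symm)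
    exact (hv.add_eq_left_of_lt (h₆.trans_eq (h'.trans h).symm)).trans (h'.trans h)
  rw [← map_pow, heq, hsum, map_pow]

lemma map_tangent_eq_sq_of_lt (hv : IsNonarchimedean v) (h2 : v 2 < 1) (ha₂ : v a₂ ≤ ρ)
    (ha₄ : v a₄ ≤ ρ ^ 2) (hx : ρ < v x) : v (3 * x ^ 2 + 2 * a₂ * x + a₄) = v x ^ 2 := by
  have hρ : 0 ≤ ρ := (apply_nonneg v _).trans ha₂
  have h₀ : v (3 * x ^ 2) = v x ^ 2 := by
    rw [map_mul, map_pow, map_three_eq_one hv h2, one_mul]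
  have h₂ : v (2 * a₂ * x) < v x ^ 2 := by
    calc v (2 * a₂ * x) = v 2 * (v a₂ * v x) := by rw [map_mul, map_mul, mul_assoc]
      _ ≤ v a₂ * v x := mul_le_of_le_one_left (by positivity) h2.le
      _ < v x ^ 2 := by nlinarith
  have h₄ : v a₄ < v x ^ 2 := ha₄.trans_lt (pow_lt_pow_left₀ hx hρ two_ne_zero)
  rw [add_assoc, hv.add_eq_left_of_lt, h₀]
  rw [h₀]
  exact (hv _ _).trans_lt (max_lt h₂ h₄)

lemma map_mul_quadratic_le (hv : IsNonarchimedean v) {a b k l : K} (hab : v a ≤ v b)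
    (hkl : v k ≤ v l) : v (k * l * (a ^ 2 + a * b + b ^ 2)) ≤ (v b * v l) ^ 2 := by
  have hquad : v (a ^ 2 + a * b + b ^ 2) ≤ v b ^ 2 := by
    refine (hv _ _).trans (max_le ((hv _ _).trans (max_le ?_ ?_)) (map_pow v b 2).le)
    · rw [map_pow]
      gcongr
    · rw [map_mul, sq]
      gcongr
  calc v (k * l * (a ^ 2 + a * b + b ^ 2)) = v k * v l * v (a ^ 2 + a * b + b ^ 2) := by
        rw [map_mul, map_mul]
    _ ≤ v l * v l * v b ^ 2 := by gcongr
    _ = (v b * v l) ^ 2 := by ring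

lemma map_mul_sub_mul_le (hv : IsNonarchimedean v) {a b c k l : K} (hab : v a ≤ v b)
    (hc : v c ≤ v b) (hkl : v k ≤ v l) :
    v (k * l * (k - l) * (a * b * c)) ≤ (v b * v l) ^ 3 := by
  have hsub : v (k - l) ≤ v l := by
    rw [sub_eq_add_neg]
    exact (hv _ _).trans (max_le hkl (map_neg_eq_map v l).le)
  calc v (k * l * (k - l) * (a * b * c))
      = v k * v l * v (k - l) * (v a * v b * v c) := by simp only [map_mul]
    _ ≤ v l * v l * v l * (v b * v b * v b) := by gcongr
    _ = (v b * v l) ^ 3 := by ring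

end AbsoluteValue

section Doubling

variable {K : Type*} [Field K] [DecidableEq K] {W : WeierstrassCurve.Affine K} [W.IsCharNeTwoNF]
  {x y : K}

lemma slope_self_eq_div (x y : K) :
    W.slope x x y y = (3 * x ^ 2 + 2 * W.a₂ * x + W.a₄) / (2 * y) := by
  by_cases hy : y = W.negY x y
  · have h2y : 2 * y = 0 := by
      simp only [negY, a₁_of_isCharNeTwoNF, a₃_of_isCharNeTwoNF] at hy
      linear_combination hy
    rw [slope_of_Y_eq rfl hy, h2y, div_zero]
  · rw [slope_of_Y_ne rfl hy]
    simp only [negY, a₁_of_isCharNeTwoNF, a₃_of_isCharNeTwoNF]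
    ring

/-- The absolute value of the `x`-coordinate of a point, whose growth under doubling rules out
torsion. The point at infinity gets the value `0`, so that it never counts as large. -/
def xAbs (v : AbsoluteValue K ℝ) : W.Point → ℝ
  | .zero => 0
  | .some x _ _ => v x

variable {v : AbsoluteValue K ℝ} {ρ : ℝ}

lemma xAbs_two_nsmul_eq_of_lt (hv : IsNonarchimedean v) (h2 : v 2 < 1) (h : W.Nonsingular x y)
    (ha₂ : v W.a₂ < v (W.slope x x y y ^ 2)) (hx : v x < v (W.slope x x y y ^ 2)) :
    xAbs v (2 • Point.some x y h) = v (W.slope x x y y ^ 2) := by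
  have hneg : y ≠ W.negY x y := by
    intro hy
    rw [slope_of_Y_eq rfl hy] at hx
    simpa using (apply_nonneg v x).trans_lt hx
  have hlt : v (-(W.a₂ + 2 * x)) < v (W.slope x x y y ^ 2) := by
    rw [map_neg_eq_map]
    refine (hv _ _).trans_lt (max_lt ha₂ ?_)
    rw [map_mul]
    exact (mul_le_of_le_one_left (apply_nonneg v x) h2.le).trans_lt hx
  rw [two_nsmul, Point.add_self_of_Y_ne hneg]
  calc v (W.addX x x (W.slope x x y y))
      = v (W.slope x x y y ^ 2 + -(W.a₂ + 2 * x)) := by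
        rw [addX, a₁_of_isCharNeTwoNF]
        ring_nf
    _ = v (W.slope x x y y ^ 2) := hv.add_eq_left_of_lt hlt

lemma xAbs_lt_xAbs_two_nsmul (hv : IsNonarchimedean v) (h2 : v 2 < 1) (h2₀ : (2 : K) ≠ 0)
    (ha₂ : v W.a₂ ≤ ρ) (ha₄ : v W.a₄ ≤ ρ ^ 2) (ha₆ : v W.a₆ ≤ ρ ^ 3) (P : W.Point)
    (hP : ρ < xAbs v P) : xAbs v P < xAbs v (2 • P) := by
  have hρ : 0 ≤ ρ := (apply_nonneg v _).trans ha₂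
  rcases P with _ | ⟨x, y, h⟩
  · exact absurd hP hρ.not_gt
  change ρ < v x at hP
  have hx : 0 < v x := hρ.trans_lt hP
  have hv2 : 0 < v 2 := v.pos h2₀
  have hy : v y ^ 2 = v x ^ 3 := sq_map_eq_map_pow_three_of_lt hv ha₂ ha₄ ha₆ hP
    (by simpa using (equation_iff x y).1 h.1)
  have hslope : v (W.slope x x y y ^ 2) = v x / v 2 ^ 2 := by
    rw [slope_self_eq_div, map_pow, map_div₀, map_mul, map_tangent_eq_sq_of_lt hv h2 ha₂ ha₄ hP,
      div_pow, mul_pow, hy]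
    field_simp
  have hlt : v x < v (W.slope x x y y ^ 2) := by
    rw [hslope, lt_div_iff₀ (by positivity)]
    exact mul_lt_of_lt_one_right hx (pow_lt_one₀ hv2.le h2 two_ne_zero)
  rwa [xAbs_two_nsmul_eq_of_lt hv h2 h (ha₂.trans_lt (hP.trans hlt)) hlt]

lemma not_isOfFinAddOrder_of_lt_map_slope_sq (hv : IsNonarchimedean v) (h2 : v 2 < 1)
    (h2₀ : (2 : K) ≠ 0) (ha₂ : v W.a₂ ≤ ρ) (ha₄ : v W.a₄ ≤ ρ ^ 2) (ha₆ : v W.a₆ ≤ ρ ^ 3)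
    (h : W.Nonsingular x y) (hx : v x ≤ ρ) (hslope : ρ < v (W.slope x x y y ^ 2)) :
    ¬IsOfFinAddOrder (Point.some x y h) := by
  have hdbl : ρ < xAbs v (2 • Point.some x y h) := by
    rwa [xAbs_two_nsmul_eq_of_lt hv h2 h (ha₂.trans_lt hslope) (hx.trans_lt hslope)]
  exact fun hfin ↦ not_isOfFinAddOrder_of_forall_lt_nsmul
    (xAbs_lt_xAbs_two_nsmul hv h2 h2₀ ha₂ ha₄ ha₆) hdbl hfin.nsmul

end Doubling

section TwoAdic

lemma norm_sub_one_lt_one_of_norm_eq_one {u : ℤ_[2]} (hu : ‖u‖ = 1) : ‖u - 1‖ < 1 := by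
  have hrepr : u.zmodRepr ≠ 0 := fun h ↦ by
    simpa [h, hu] using u.norm_sub_zmodRepr_lt_one
  have hone : u.zmodRepr = 1 := by
    have := u.zmodRepr_lt_p
    lia
  simpa [hone] using u.norm_sub_zmodRepr_lt_one

lemma norm_sub_le_half_of_norm_eq {x y : ℚ_[2]} (h : ‖x‖ = ‖y‖) : ‖x - y‖ ≤ ‖y‖ / 2 := by
  rcases eq_or_ne y 0 with rfl | hy
  · simp_all
  have hu : ‖x / y‖ = 1 := by rw [norm_div, h, div_self (norm_ne_zero_iff.2 hy)]
  have hlt : ‖x / y - 1‖ < 1 :=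
    norm_sub_one_lt_one_of_norm_eq_one (u := ⟨x / y, hu.le⟩) (PadicInt.norm_def.trans hu)
  have hle : ‖x / y - 1‖ ≤ 1 / 2 := by
    have h := (Padic.norm_le_pow_iff_norm_lt_pow_add_one (x / y - 1) (-1)).2 (by simpa using hlt)
    rwa [zpow_neg_one, Nat.cast_ofNat, ← one_div] at h
  calc ‖x - y‖ = ‖y‖ * ‖x / y - 1‖ := by
        rw [← norm_mul]
        field_simp
    _ ≤ ‖y‖ / 2 := by linarith [mul_le_mul_of_nonneg_left hle (norm_nonneg y)]

variable {K : Type*} [Field K]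

/-- The `2`-adic absolute value, normalised by `|2| = 1 / 2`, induced on a field by an embedding
into `ℚ₂`. It measures the size of the `x`-coordinates. -/
noncomputable def twoAdicAbs (f : K →+* ℚ_[2]) : AbsoluteValue K ℝ where
  toFun x := ‖f x‖
  map_mul' x y := by simp
  nonneg' x := norm_nonneg _
  eq_zero' x := by simp
  add_le' x y := by simpa using norm_add_le (f x) (f y)

lemma isNonarchimedean_twoAdicAbs (f : K →+* ℚ_[2]) : IsNonarchimedean (twoAdicAbs f) :=
  fun x y ↦ by simpa [twoAdicAbs] using Padic.nonarchimedean (f x) (f y)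

lemma twoAdicAbs_two (f : K →+* ℚ_[2]) : twoAdicAbs f 2 = 1 / 2 := by
  simpa [twoAdicAbs, map_ofNat] using Padic.norm_p (p := 2)

lemma twoAdicAbs_two_lt_one (f : K →+* ℚ_[2]) : twoAdicAbs f 2 < 1 := by
  rw [twoAdicAbs_two]
  exact one_half_lt_one

lemma two_ne_zero_of_ringHom (f : K →+* ℚ_[2]) : (2 : K) ≠ 0 :=
  (twoAdicAbs f).ne_zero_iff.1 (by simp [twoAdicAbs_two])

lemma twoAdicAbs_add_le_half {f : K →+* ℚ_[2]} {x y : K} (h : twoAdicAbs f x = twoAdicAbs f y) :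
    twoAdicAbs f (x + y) ≤ twoAdicAbs f y / 2 := by
  simpa [twoAdicAbs] using norm_sub_le_half_of_norm_eq (x := f x) (y := -f y) (by rwa [norm_neg])

lemma twoAdicAbs_half_add_le {f : K →+* ℚ_[2]} {a b : K}
    (hab : twoAdicAbs f a = twoAdicAbs f b) : twoAdicAbs f ((a + b) / 2) ≤ twoAdicAbs f b := by
  rw [map_div₀, twoAdicAbs_two]
  linarith [twoAdicAbs_add_le_half hab]

end TwoAdic

section DepressedCurve

variable {K : Type*} [Field K]

/-- The short Weierstrass form of `y² = x³ + t x² + δ²`, in which `x` becomes `x + t / 3`; it is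
that curve only if `3 ≠ 0`. Its points are given below by the coordinates `x`, `y`. -/
def depressedCurve (t δ : K) : WeierstrassCurve.Affine K :=
  ⟨0, 0, 0, -t ^ 2 / 3, 2 * t ^ 3 / 27 + δ ^ 2⟩

instance (t δ : K) : (depressedCurve t δ).IsCharNeTwoNF := ⟨rfl, rfl⟩

lemma depressedCurve_neg (t δ : K) : depressedCurve t (-δ) = depressedCurve t δ := by
  simp [depressedCurve]

lemma nonsingular_depressedCurve {t δ x y : K} (h2 : (2 : K) ≠ 0) (h3 : (3 : K) ≠ 0) (hy : y ≠ 0)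
    (heq : y ^ 2 = x ^ 2 * (x + t) + δ ^ 2) : (depressedCurve t δ).Nonsingular (x + t / 3) y := by
  have h27 : (27 : K) = 3 ^ 3 := by norm_num
  rw [nonsingular_iff', equation_iff]
  refine ⟨?_, Or.inr (by simp [depressedCurve, h2, hy])⟩
  simp only [depressedCurve, h27]
  field_simp
  linear_combination 27 * heq

lemma slope_self_depressedCurve [DecidableEq K] {t δ : K} (x y : K) (h3 : (3 : K) ≠ 0) :
    (depressedCurve t δ).slope (x + t / 3) (x + t / 3) y y = x * (3 * x + 2 * t) / (2 * y) := by
  rw [slope_self_eq_div]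
  simp only [depressedCurve]
  congr 1
  field_simp
  ring

lemma sq_map_le_map_pow_three {v : AbsoluteValue K ℝ} (hv : IsNonarchimedean v) {t δ x y : K}
    (ht : v t ≤ v x) (hδ : v δ ^ 2 ≤ v x ^ 3) (heq : y ^ 2 = x ^ 2 * (x + t) + δ ^ 2) :
    v y ^ 2 ≤ v x ^ 3 := by
  have hxt : v (x + t) ≤ v x := (hv x t).trans (max_le le_rfl ht)
  rw [← map_pow, heq]
  refine (hv _ _).trans (max_le ?_ (by rwa [map_pow]))
  calc v (x ^ 2 * (x + t)) = v x ^ 2 * v (x + t) := by rw [map_mul, map_pow]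
    _ ≤ v x ^ 2 * v x := by gcongr
    _ = v x ^ 3 := by ring

lemma map_lt_map_slope_sq_depressedCurve [DecidableEq K] {v : AbsoluteValue K ℝ}
    (hv : IsNonarchimedean v) (h2 : v 2 < 1) (h2₀ : (2 : K) ≠ 0) {t δ x y : K} (ht : v t ≤ v x)
    (hδ : v δ ^ 2 ≤ v x ^ 3) (hy : y ≠ 0) (heq : y ^ 2 = x ^ 2 * (x + t) + δ ^ 2) :
    v x < v ((depressedCurve t δ).slope (x + t / 3) (x + t / 3) y y ^ 2) := by
  have h3 : v 3 = 1 := map_three_eq_one hv h2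
  have h3₀ : (3 : K) ≠ 0 := v.ne_zero_iff.1 (h3 ▸ one_ne_zero)
  have hv2 : 0 < v 2 := v.pos h2₀
  have hvy : 0 < v y := v.pos hy
  have hyx : v y ^ 2 ≤ v x ^ 3 := sq_map_le_map_pow_three hv ht hδ heq
  have hx : 0 < v x := by
    by_contra! hx
    have hx₀ : v x = 0 := hx.antisymm (apply_nonneg v x)
    rw [hx₀, zero_pow three_ne_zero] at hyx
    exact hyx.not_gt (by positivity)
  have h3x : v (3 * x) = v x := by rw [map_mul, h3, one_mul]
  have htan : v (3 * x + 2 * t) = v x := by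
    rw [hv.add_eq_left_of_lt, h3x]
    rw [h3x, map_mul]
    nlinarith
  rw [slope_self_depressedCurve x y h3₀, map_pow, map_div₀, map_mul, map_mul, htan, div_pow,
    lt_div_iff₀ (by positivity)]
  calc v x * (v 2 * v y) ^ 2 = v 2 ^ 2 * (v x * v y ^ 2) := by ring
    _ < 1 * (v x * v y ^ 2) := by gcongr; exact pow_lt_one₀ hv2.le h2 two_ne_zero
    _ ≤ 1 * (v x * v x ^ 3) := by gcongr
    _ = (v x * v x) ^ 2 := by ring

lemma exists_not_isOfFinAddOrder_depressedCurve [DecidableEq K] {v : AbsoluteValue K ℝ}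
    (hv : IsNonarchimedean v) (h2 : v 2 < 1) (h2₀ : (2 : K) ≠ 0) {t δ x y : K} (ht : v t ≤ v x)
    (hδ : v δ ^ 2 ≤ v x ^ 3) (hy : y ≠ 0) (heq : y ^ 2 = x ^ 2 * (x + t) + δ ^ 2) :
    ∃ P : (depressedCurve t δ).Point, ¬IsOfFinAddOrder P := by
  have h3 : v 3 = 1 := map_three_eq_one hv h2
  have h3₀ : (3 : K) ≠ 0 := v.ne_zero_iff.1 (h3 ▸ one_ne_zero)
  have ha₄ : v (-t ^ 2 / 3) ≤ v x ^ 2 := by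
    rw [map_div₀, h3, div_one, map_neg_eq_map, map_pow]
    gcongr
  have ha₆ : v (2 * t ^ 3 / 27 + δ ^ 2) ≤ v x ^ 3 := by
    refine (hv _ _).trans (max_le ?_ (by rwa [map_pow]))
    calc v (2 * t ^ 3 / 27) = v 2 * v t ^ 3 := by
          rw [show (27 : K) = 3 ^ 3 by norm_num]
          simp [h3]
      _ ≤ 1 * v x ^ 3 := by gcongr
      _ = v x ^ 3 := one_mul _
  have hx : v (x + t / 3) ≤ v x := by
    refine (hv _ _).trans (max_le le_rfl ?_)
    rwa [map_div₀, h3, div_one]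
  exact ⟨.some _ _ (nonsingular_depressedCurve h2₀ h3₀ hy heq),
    not_isOfFinAddOrder_of_lt_map_slope_sq hv h2 h2₀ (by simp [depressedCurve]) ha₄ ha₆ _ hx
      (map_lt_map_slope_sq_depressedCurve hv h2 h2₀ ht hδ hy heq)⟩

end DepressedCurve

section HolmJacobian

variable {K : Type*} [Field K]

/-- The Jacobian of the plane cubic `k f(x) = l f(y)`, where `f` is a monic cubic whose roots have
differences `a`, `b` and `a + b`; the roots `-1`, `1`, `β` give `E_β`. Halving `a + b` rather than
`a` or `b` suits the case in which `a` and `b` have equal `2`-adic size. -/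
def holmJacobian (a b k l : K) : WeierstrassCurve.Affine K :=
  depressedCurve (k * l * (a ^ 2 + a * b + b ^ 2)) (k * l * (k - l) * (a * b * ((a + b) / 2)))

lemma holmJacobian_swap_differences (a b k l : K) :
    holmJacobian b a k l = holmJacobian a b k l := by
  unfold holmJacobian
  congr 1 <;> ring

lemma holmJacobian_add_neg (a b k l : K) :
    holmJacobian (a + b) (-b) k l = holmJacobian a b k l := by
  unfold holmJacobian
  rw [← depressedCurve_neg]
  congr 1 <;> ring

lemma holmJacobian_swap_weights (a b k l : K) : holmJacobian a b l k = holmJacobian a b k l := by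
  unfold holmJacobian
  rw [← depressedCurve_neg]
  congr 1 <;> ring

lemma holmJacobian_two_sub_one {β k l : ℚ} :
    holmJacobian 2 (β - 1) k l = WeierstrassCurve.mk 0 0 0
      (-(1 / 3) * k ^ 2 * l ^ 2 * (3 + β ^ 2) ^ 2)
      ((1 / 27) * k ^ 2 * l ^ 2 * (2 * k * l * β ^ 2 * (β ^ 2 - 9) ^ 2 +
        27 * k ^ 2 * (β ^ 2 - 1) ^ 2 + 27 * l ^ 2 * (β ^ 2 - 1) ^ 2)) := by
  unfold holmJacobian depressedCurve
  congr 1 <;> ring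

variable [DecidableEq K] {f : K →+* ℚ_[2]} {a b k l : K}

lemma exists_not_isOfFinAddOrder_holmJacobian_of_point {x y : K}
    (hab : twoAdicAbs f a = twoAdicAbs f b) (hkl : twoAdicAbs f k ≤ twoAdicAbs f l)
    (hx : twoAdicAbs f x = (twoAdicAbs f b * twoAdicAbs f l) ^ 2) (hy : y ≠ 0)
    (heq : y ^ 2 = x ^ 2 * (x + k * l * (a ^ 2 + a * b + b ^ 2)) +
      (k * l * (k - l) * (a * b * ((a + b) / 2))) ^ 2) :
    ∃ P : (holmJacobian a b k l).Point, ¬IsOfFinAddOrder P := by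
  have hv : IsNonarchimedean (twoAdicAbs f) := isNonarchimedean_twoAdicAbs f
  refine exists_not_isOfFinAddOrder_depressedCurve hv (twoAdicAbs_two_lt_one f)
    (two_ne_zero_of_ringHom f) (hx ▸ map_mul_quadratic_le hv hab.le hkl) ?_ hy heq
  rw [hx, pow_right_comm]
  exact pow_le_pow_left₀ (apply_nonneg _ _)
    (map_mul_sub_mul_le hv hab.le (twoAdicAbs_half_add_le hab) hkl) 2

lemma exists_not_isOfFinAddOrder_holmJacobian_of_weight_lt (ha : a ≠ 0)
    (hab : twoAdicAbs f a = twoAdicAbs f b) (hkl : twoAdicAbs f k < twoAdicAbs f l) :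
    ∃ P : (holmJacobian a b k l).Point, ¬IsOfFinAddOrder P := by
  have h2 : (2 : K) ≠ 0 := two_ne_zero_of_ringHom f
  have hhalf := twoAdicAbs_half_add_le hab
  have hv : IsNonarchimedean (twoAdicAbs f) := isNonarchimedean_twoAdicAbs f
  have hl : l ≠ 0 := (twoAdicAbs f).pos_iff.1 ((apply_nonneg _ k).trans_lt hkl)
  have hlk : twoAdicAbs f (l - k) = twoAdicAbs f l := by
    rw [sub_eq_add_neg, hv.add_eq_left_of_lt (by rwa [map_neg_eq_map])]
  have hlk₀ : l - k ≠ 0 := (twoAdicAbs f).ne_zero_iff.1 (hlk ▸ (twoAdicAbs f).ne_zero hl)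
  have hlt : twoAdicAbs f (k * b * ((a + b) / 2)) < twoAdicAbs f (l * a ^ 2) := by
    calc twoAdicAbs f (k * b * ((a + b) / 2))
        ≤ twoAdicAbs f k * twoAdicAbs f b * twoAdicAbs f b := by
          rw [map_mul, map_mul]
          gcongr
      _ = twoAdicAbs f k * twoAdicAbs f a ^ 2 := by rw [hab]; ring
      _ < twoAdicAbs f l * twoAdicAbs f a ^ 2 := by
          have := (twoAdicAbs f).pos ha
          gcongr
      _ = twoAdicAbs f (l * a ^ 2) := by rw [map_mul, map_pow]
  have hsum : l * a ^ 2 + k * b * ((a + b) / 2) ≠ 0 := by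
    rw [← (twoAdicAbs f).ne_zero_iff, hv.add_eq_left_of_lt hlt]
    exact (twoAdicAbs f).ne_zero (by positivity)
  -- `x + t = l (l a² + 2 k b c)` and `δ = l (k - l) a (k b c)` with `c = (a + b) / 2`, so
  -- `x² (x + t)` completes `δ²` to a square.
  refine exists_not_isOfFinAddOrder_holmJacobian_of_point hab hkl.le (x := a ^ 2 * (l * (l - k)))
    (y := l * (l - k) * a * (l * a ^ 2 + k * b * ((a + b) / 2))) ?_ (by positivity) ?_
  · rw [map_mul, map_mul, map_pow, hlk, hab]
    ring
  · field_simp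
    ring

lemma exists_not_isOfFinAddOrder_holmJacobian_of_weight_eq (ha : a ≠ 0) (hb : b ≠ 0)
    (hadd : a + b ≠ 0) (hk : k ≠ 0) (hl : l ≠ 0) (hkl : k + l ≠ 0)
    (hab : twoAdicAbs f a = twoAdicAbs f b) (hvkl : twoAdicAbs f k = twoAdicAbs f l) :
    ∃ P : (holmJacobian a b k l).Point, ¬IsOfFinAddOrder P := by
  have h2 : (2 : K) ≠ 0 := two_ne_zero_of_ringHom f
  -- `x² (x + t) = 4 k l w²` and `δ = (k - l) w` with `w = k l a b (a + b) / 2`, whence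
  -- `y = (k + l) w`.
  refine exists_not_isOfFinAddOrder_holmJacobian_of_point hab hvkl.le (x := k * l * (a * b))
    (y := k * l * (k + l) * (a * b * ((a + b) / 2))) ?_ (by positivity) ?_
  · simp only [map_mul, hab, hvkl]
    ring
  · field_simp
    ring

lemma exists_not_isOfFinAddOrder_holmJacobian_of_difference_eq (ha : a ≠ 0) (hb : b ≠ 0)
    (hadd : a + b ≠ 0) (hk : k ≠ 0) (hl : l ≠ 0) (hkl : k + l ≠ 0)
    (hab : twoAdicAbs f a = twoAdicAbs f b) :
    ∃ P : (holmJacobian a b k l).Point, ¬IsOfFinAddOrder P := by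
  rcases lt_trichotomy (twoAdicAbs f k) (twoAdicAbs f l) with h | h | h
  · exact exists_not_isOfFinAddOrder_holmJacobian_of_weight_lt ha hab h
  · exact exists_not_isOfFinAddOrder_holmJacobian_of_weight_eq ha hb hadd hk hl hkl hab h
  · rw [← holmJacobian_swap_weights]
    exact exists_not_isOfFinAddOrder_holmJacobian_of_weight_lt ha hab h

lemma exists_not_isOfFinAddOrder_holmJacobian_of_difference_le (ha : a ≠ 0) (hb : b ≠ 0)
    (hadd : a + b ≠ 0) (hk : k ≠ 0) (hl : l ≠ 0) (hkl : k + l ≠ 0)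
    (hab : twoAdicAbs f a ≤ twoAdicAbs f b) :
    ∃ P : (holmJacobian a b k l).Point, ¬IsOfFinAddOrder P := by
  rcases hab.eq_or_lt with hab | hab
  · exact exists_not_isOfFinAddOrder_holmJacobian_of_difference_eq ha hb hadd hk hl hkl hab
  · rw [← holmJacobian_add_neg]
    refine exists_not_isOfFinAddOrder_holmJacobian_of_difference_eq hadd (neg_ne_zero.2 hb)
      (by simpa) hk hl hkl (f := f) ?_
    rw [map_neg_eq_map, (isNonarchimedean_twoAdicAbs f).add_eq_right_of_lt hab]

end HolmJacobian

theorem holm_jacobian_positive_rank_general {K : Type*} [Field K] [DecidableEq K]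
    (f : K →+* ℚ_[2]) {a b k l : K} (ha : a ≠ 0) (hb : b ≠ 0) (hab : a + b ≠ 0)
    (hk : k ≠ 0) (hl : l ≠ 0) (hkl : k + l ≠ 0) :
    ∃ P : (holmJacobian a b k l).Point, ∀ n : ℕ, 0 < n → n • P ≠ 0 := by
  suffices ∃ P : (holmJacobian a b k l).Point, ¬IsOfFinAddOrder P by
    simpa [isOfFinAddOrder_iff_nsmul_eq_zero] using this
  rcases le_total (twoAdicAbs f a) (twoAdicAbs f b) with h | h
  · exact exists_not_isOfFinAddOrder_holmJacobian_of_difference_le ha hb hab hk hl hkl h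
  · rw [← holmJacobian_swap_differences]
    exact exists_not_isOfFinAddOrder_holmJacobian_of_difference_le hb ha (by rwa [add_comm])
      hk hl hkl h

/-- For `β ∈ ℚ` with `β ≠ ±1` and distinct positive coprime integers `k, l`, the
Mordell–Weil group `E_β(ℚ)` of the elliptic curve
`E_β : Y² = X³ − (1/3)k²l²(3+β²)²·X + (1/27)k²l²(2klβ²(β²−9)² + 27k²(β²−1)² + 27l²(β²−1)²)`
has positive rank: there is a rational point of infinite order for the chord-and-tangent
group law with identity the point at infinity. -/
theorem holm_jacobian_positive_rank (β : ℚ) (hβ1 : β ≠ 1) (hβ2 : β ≠ -1)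
    (k l : ℕ) (hk : 0 < k) (hl : 0 < l) (hne : k ≠ l) (hkl : Nat.Coprime k l)
    (W : WeierstrassCurve ℚ)
    (hW : W = WeierstrassCurve.mk 0 0 0
      (-(1 / 3) * (k : ℚ) ^ 2 * (l : ℚ) ^ 2 * (3 + β ^ 2) ^ 2)
      ((1 / 27) * (k : ℚ) ^ 2 * (l : ℚ) ^ 2 *
        (2 * k * l * β ^ 2 * (β ^ 2 - 9) ^ 2 + 27 * (k : ℚ) ^ 2 * (β ^ 2 - 1) ^ 2 +
          27 * (l : ℚ) ^ 2 * (β ^ 2 - 1) ^ 2))) :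
    ∃ P : W.toAffine.Point, ∀ n : ℕ, 0 < n → n • P ≠ 0 := by
  obtain rfl := hW.trans holmJacobian_two_sub_one.symm
  exact holm_jacobian_positive_rank_general (algebraMap ℚ ℚ_[2]) two_ne_zero (sub_ne_zero.2 hβ1)
    (by contrapose! hβ2; linear_combination hβ2) (by positivity) (by positivity) (by positivity)
end

section
/- Let a, b ∈ ℚ with 4a³ + 27b² ≠ 0, and let E be the elliptic curve Y² = X³ + aX + b over ℚ. Suppose E(ℚ) has positive rank, i.e., there is a rational point of E of infinite order in the Mordell–Weil group. Let p₁, p₂, …, p_t be distinct prime numbers. Then there exists an integer N such that for all integers m₁, m₂, …, m_t ≥ N there exists a pair (X, Y) ∈ ℚ × ℚ with Y² = X³ + aX + b, and with the pᵢ-adic valuation of X equal to −2mᵢ and the pᵢ-adic valuation of Y equal to −3mᵢ for every i with 1 ≤ i ≤ t. -/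
/-!
Near infinity in `E(ℚ_p)` the local parameter `z = x / y` turns the group law into addition up to
higher order terms. Hence `|z(nQ)| = |n| |z(Q)|`, while `|x| = |z|⁻²` and `|y| = |z|⁻³`, so that
`ord_p z(nQ) - ord_p n` does not depend on `n`. A point `P` of infinite order has a multiple near
infinity: otherwise its multiples accumulate at an affine point of the compact set `E(ℚ_p)`, where
bounded slopes of chords contradict nonsingularity. With a multiple `kP` that is near infinity for
all the `pᵢ`, the points `nkP` with `n = ∏ pᵢ ^ eᵢ` realise all large valuations.
-/

namespace ShortWeierstrass

section Ultrametric

open IsUltrametricDist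

variable {M : Type*} [SeminormedAddGroup M] [IsUltrametricDist M] {x y : M} {c : ℝ}

lemma norm_add_le_of_le_of_le (hx : ‖x‖ ≤ c) (hy : ‖y‖ ≤ c) : ‖x + y‖ ≤ c :=
  (norm_add_le_max x y).trans (max_le hx hy)

lemma norm_sub_le_of_le_of_le (hx : ‖x‖ ≤ c) (hy : ‖y‖ ≤ c) : ‖x - y‖ ≤ c :=
  sub_eq_add_neg x y ▸ norm_add_le_of_le_of_le hx (by rwa [norm_neg])

lemma norm_add_lt_of_lt_of_lt (hx : ‖x‖ < c) (hy : ‖y‖ < c) : ‖x + y‖ < c :=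
  (norm_add_le_max x y).trans_lt (max_lt hx hy)

lemma norm_eq_of_norm_sub_lt (h : ‖x - y‖ < ‖y‖) : ‖x‖ = ‖y‖ := by
  simpa using norm_eq_of_add_norm_lt_max (x := x) (y := -y)
    (by simpa [sub_eq_add_neg] using Or.inr h)

lemma norm_natCast_mul_le {R : Type*} [NormedDivisionRing R] [IsUltrametricDist R] (n : ℕ) {x : R}
    (hx : ‖x‖ ≤ c) : ‖n * x‖ ≤ c := by
  rw [norm_mul]
  exact (mul_le_of_le_one_left (norm_nonneg x) (norm_natCast_le_one R n)).trans hx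

end Ultrametric

section Chord

variable {F : Type*} [Field F]

open WeierstrassCurve.Affine

/-- The line `Y = lX + n` meets the curve `Y² = X³ + a₄X + a₆` in the points `(xᵢ, yᵢ)`, counted
with multiplicity. The last three fields are Vieta's formulas for `X³ + a₄X + a₆ - (lX + n)²`, which
treat chords and tangents alike. -/
structure IsChord (W : WeierstrassCurve.Affine F) (l n x₁ y₁ x₂ y₂ x₃ y₃ : F) : Prop where
  y₁_eq : y₁ = l * x₁ + n
  y₂_eq : y₂ = l * x₂ + n
  y₃_eq : y₃ = l * x₃ + n
  sum_eq : x₁ + x₂ + x₃ = l ^ 2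
  sum_mul_eq : x₁ * x₂ + x₁ * x₃ + x₂ * x₃ = W.a₄ - 2 * l * n
  prod_eq : x₁ * x₂ * x₃ = n ^ 2 - W.a₆

variable {W : WeierstrassCurve.Affine F} {l n x₁ y₁ x₂ y₂ x₃ y₃ : F}

lemma IsChord.rotate (h : IsChord W l n x₁ y₁ x₂ y₂ x₃ y₃) : IsChord W l n x₂ y₂ x₃ y₃ x₁ y₁ where
  y₁_eq := h.y₂_eq
  y₂_eq := h.y₃_eq
  y₃_eq := h.y₁_eq
  sum_eq := by linear_combination h.sum_eq
  sum_mul_eq := by linear_combination h.sum_mul_eq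
  prod_eq := by linear_combination h.prod_eq

lemma IsChord.slope_mul_sub (h : IsChord W l n x₁ y₁ x₂ y₂ x₃ y₃) : l * (x₁ - x₂) = y₁ - y₂ := by
  linear_combination h.y₂_eq - h.y₁_eq

lemma IsChord.slope_mul_add (h : IsChord W l n x₁ y₁ x₂ y₂ x₃ y₃) :
    l * (y₁ + y₂) = x₁ ^ 2 + x₁ * x₂ + x₂ ^ 2 + W.a₄ := by
  linear_combination l * h.y₁_eq + l * h.y₂_eq - (x₁ + x₂) * h.sum_eq + h.sum_mul_eq

/-- In the coordinates `z = x / y` and `w = 1 / y` at infinity the curve is `w = z³ + a₄zw² + a₆w³`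
and the line has slope `-l / n`. Subtracting the equations of two points computes that slope. -/
lemma IsChord.slope_mul_eq (h : IsChord W l n x₁ y₁ x₂ y₂ x₃ y₃) (h₁ : y₁ ≠ 0) (h₂ : y₂ ≠ 0) :
    l * (1 - (W.a₄ * (x₁ / y₁) * (y₁⁻¹ + y₂⁻¹) +
        W.a₆ * (y₁⁻¹ ^ 2 + y₁⁻¹ * y₂⁻¹ + y₂⁻¹ ^ 2))) =
      -n * ((x₁ / y₁) ^ 2 + x₁ / y₁ * (x₂ / y₂) + (x₂ / y₂) ^ 2 + W.a₄ * y₂⁻¹ ^ 2) := by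
  have ha : W.a₄ = x₁ * x₂ + x₁ * x₃ + x₂ * x₃ + 2 * l * n := by rw [h.sum_mul_eq]; ring
  have hb : W.a₆ = n ^ 2 - x₁ * x₂ * x₃ := by rw [h.prod_eq]; ring
  have hx₃ : x₃ = l ^ 2 - x₁ - x₂ := by rw [← h.sum_eq]; ring
  field_simp
  rw [ha, hb, hx₃, h.y₁_eq, h.y₂_eq]
  ring

lemma IsChord.mul_mul_eq (h : IsChord W l n x₁ y₁ x₂ y₂ x₃ y₃) :
    y₁ * y₂ * y₃ = n ^ 3 + W.a₄ * l ^ 2 * n - W.a₆ * l ^ 3 := by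
  rw [h.y₁_eq, h.y₂_eq, h.y₃_eq]
  linear_combination l ^ 3 * h.prod_eq + l ^ 2 * n * h.sum_mul_eq + l * n ^ 2 * h.sum_eq

lemma IsChord.sum_mul_mul_eq (h : IsChord W l n x₁ y₁ x₂ y₂ x₃ y₃) :
    x₁ * y₂ * y₃ + x₂ * y₁ * y₃ + x₃ * y₁ * y₂ = 2 * W.a₄ * l * n - 3 * W.a₆ * l ^ 2 := by
  rw [h.y₁_eq, h.y₂_eq, h.y₃_eq]
  linear_combination 3 * l ^ 2 * h.prod_eq + 2 * l * n * h.sum_mul_eq + n ^ 2 * h.sum_eq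

variable [W.IsShortNF]

lemma equation_iff_of_isShortNF {x y : F} :
    W.Equation x y ↔ y ^ 2 = x ^ 3 + W.a₄ * x + W.a₆ := by
  simp [equation_iff]

lemma isElliptic_of_isShortNF [NeZero (2 : F)]
    (h : 4 * W.a₄ ^ 3 + 27 * W.a₆ ^ 2 ≠ 0) : W.IsElliptic := by
  refine ⟨IsUnit.mk0 _ ?_⟩
  rw [W.Δ_of_isShortNF]
  have h16 : (-16 : F) ≠ 0 := by
    rw [show (-16 : F) = -2 ^ 4 by norm_num]
    exact neg_ne_zero.2 (pow_ne_zero 4 two_ne_zero)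
  exact mul_ne_zero h16 h

lemma negY_of_isShortNF (x y : F) : W.negY x y = -y := by simp [negY]

lemma IsChord.equation (h : IsChord W l n x₁ y₁ x₂ y₂ x₃ y₃) : W.Equation x₁ y₁ := by
  rw [equation_iff_of_isShortNF, h.y₁_eq]
  linear_combination -x₁ ^ 2 * h.sum_eq + x₁ * h.sum_mul_eq - h.prod_eq

lemma isChord_slope [DecidableEq F] (h₁ : W.Equation x₁ y₁) (h₂ : W.Equation x₂ y₂)
    (hxy : ¬(x₁ = x₂ ∧ y₁ = W.negY x₂ y₂)) :
    IsChord W (W.slope x₁ x₂ y₁ y₂) (y₁ - W.slope x₁ x₂ y₁ y₂ * x₁) x₁ y₁ x₂ y₂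
      (W.addX x₁ x₂ (W.slope x₁ x₂ y₁ y₂)) (W.negAddY x₁ x₂ y₁ (W.slope x₁ x₂ y₁ y₂)) := by
  have hslope : y₁ - y₂ = W.slope x₁ x₂ y₁ y₂ * (x₁ - x₂) := by
    by_cases hx : x₁ = x₂
    · have hy := Y_eq_of_Y_ne h₁ h₂ hx fun hy ↦ hxy ⟨hx, hy⟩
      rw [hx, hy, sub_self, sub_self, mul_zero]
    · rw [slope_of_X_ne hx, div_mul_cancel₀ _ (sub_ne_zero.2 hx)]
  have hvieta := addPolynomial_slope h₁ h₂ hxy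
  rw [addPolynomial_eq, neg_inj, Cubic.prod_X_sub_C_eq, Cubic.toPoly_injective] at hvieta
  simp only [Cubic.mk.injEq, true_and, WeierstrassCurve.a₁_of_isShortNF,
    WeierstrassCurve.a₃_of_isShortNF] at hvieta
  exact {
    y₁_eq := by ring
    y₂_eq := by linear_combination -hslope
    y₃_eq := by rw [negAddY]; ring
    sum_eq := by simp [addX]
    sum_mul_eq := by linear_combination -hvieta.2.1
    prod_eq := by linear_combination hvieta.2.2 }

lemma exists_isChord_of_add_eq [DecidableEq F] {h₁ : W.Nonsingular x₁ y₁}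
    {h₂ : W.Nonsingular x₂ y₂} {h₃ : W.Nonsingular x₃ y₃}
    (h : Point.some _ _ h₁ + Point.some _ _ h₂ = Point.some _ _ h₃) :
    ∃ l n, IsChord W l n x₁ y₁ x₂ y₂ x₃ (-y₃) := by
  have hxy : ¬(x₁ = x₂ ∧ y₁ = W.negY x₂ y₂) := fun hxy ↦
    Point.some_ne_zero h₃ (h.symm.trans (Point.add_of_Y_eq hxy.1 hxy.2))
  rw [Point.add_some hxy, Point.some.injEq] at h
  rw [← h.1, ← h.2, addY, negY_of_isShortNF, neg_neg]
  exact ⟨_, _, isChord_slope h₁.left h₂.left hxy⟩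

lemma exists_isChord_of_nsmul_eq [DecidableEq F] {P : W.Point} {i j k : ℕ} (hijk : i = j + k)
    {h₁ : W.Nonsingular x₁ y₁} {h₂ : W.Nonsingular x₂ y₂} {h₃ : W.Nonsingular x₃ y₃}
    (hi : i • P = .some _ _ h₁) (hj : j • P = .some _ _ h₂) (hk : k • P = .some _ _ h₃) :
    ∃ l n, IsChord W l n x₁ y₁ x₂ (-y₂) x₃ (-y₃) := by
  have hadd : Point.some _ _ h₁ + -Point.some _ _ h₂ = Point.some _ _ h₃ := by
    rw [← hi, ← hj, ← hk, hijk, add_nsmul, add_neg_cancel_comm]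
  simp_rw [Point.neg_some, negY_of_isShortNF] at hadd
  exact exists_isChord_of_add_eq hadd

end Chord

section NearInfinity

open WeierstrassCurve.Affine

variable {K : Type*} [NormedField K]

/-- The error of the group law in a neighbourhood of infinity: on the points with `‖x / y‖ ≤ ε`,
the map `(x, y) ↦ x / y` is additive up to an error of norm at most `distortion W ε * ε`. -/
noncomputable def distortion (W : WeierstrassCurve.Affine K) (ε : ℝ) : ℝ :=
  max (‖W.a₄‖ * ε ^ 4) (‖W.a₆‖ * ε ^ 6)

variable {W : WeierstrassCurve.Affine K} {ε : ℝ}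

lemma norm_a₄_mul_le : ‖W.a₄‖ * ε ^ 4 ≤ distortion W ε := le_max_left _ _

lemma norm_a₆_mul_le : ‖W.a₆‖ * ε ^ 6 ≤ distortion W ε := le_max_right _ _

lemma distortion_nonneg : 0 ≤ distortion W ε :=
  le_trans (by positivity) norm_a₄_mul_le

lemma distortion_mono {ε' : ℝ} (hε' : 0 ≤ ε') (h : ε' ≤ ε) : distortion W ε' ≤ distortion W ε :=
  max_le_max (by gcongr) (by gcongr)

open Filter Topology in
lemma exists_pos_distortion_lt (W : WeierstrassCurve.Affine K) {δ : ℝ} (hδ : 0 < δ) :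
    ∃ ε, 0 < ε ∧ distortion W ε < δ := by
  have hlim : Tendsto (distortion W) (𝓝 0) (𝓝 (distortion W 0)) :=
    Continuous.tendsto (by unfold distortion; fun_prop) 0
  have hlt : ∀ᶠ ε in 𝓝[>] 0, distortion W ε < δ :=
    nhdsWithin_le_nhds (hlim.eventually_lt_const (by simpa [distortion] using hδ))
  obtain ⟨ε, hε, hpos⟩ := (hlt.and self_mem_nhdsWithin).exists
  exact ⟨ε, hpos, hε⟩

variable {x y : K}

lemma norm_X_pos (hx : 1 ≤ ‖x‖ * ε ^ 2) : 0 < ‖x‖ :=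
  (norm_nonneg x).lt_of_ne' fun h₀ ↦ by norm_num [h₀] at hx

variable [IsUltrametricDist K] [W.IsShortNF]

lemma norm_Y_sq (h : W.Equation x y) (hδ : distortion W ε < 1) (hx : 1 ≤ ‖x‖ * ε ^ 2) :
    ‖y‖ ^ 2 = ‖x‖ ^ 3 := by
  have hx₀ := norm_X_pos hx
  rw [← norm_pow, ← norm_pow, equation_iff_of_isShortNF.1 h]
  refine norm_eq_of_norm_sub_lt ?_
  rw [add_assoc, add_sub_cancel_left, norm_pow]
  refine norm_add_lt_of_lt_of_lt ?_ ?_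
  · calc ‖W.a₄ * x‖ = ‖W.a₄‖ * ‖x‖ * 1 ^ 2 := by simp
      _ ≤ ‖W.a₄‖ * ‖x‖ * (‖x‖ * ε ^ 2) ^ 2 := by gcongr
      _ = ‖W.a₄‖ * ε ^ 4 * ‖x‖ ^ 3 := by ring
      _ < ‖x‖ ^ 3 := mul_lt_of_lt_one_left (by positivity) (norm_a₄_mul_le.trans_lt hδ)
  · calc ‖W.a₆‖ = ‖W.a₆‖ * 1 ^ 3 := by simp
      _ ≤ ‖W.a₆‖ * (‖x‖ * ε ^ 2) ^ 3 := by gcongr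
      _ = ‖W.a₆‖ * ε ^ 6 * ‖x‖ ^ 3 := by ring
      _ < ‖x‖ ^ 3 := mul_lt_of_lt_one_left (by positivity) (norm_a₆_mul_le.trans_lt hδ)

lemma norm_Y_mul_lt_one (h : W.Equation x y) (hε : 0 < ε) (hδ : distortion W ε < 1)
    (hx : ‖x‖ * ε ^ 2 < 1) : ‖y‖ * ε ^ 3 < 1 := by
  refine lt_of_pow_lt_pow_left₀ 2 zero_le_one ?_
  rw [mul_pow, ← norm_pow, equation_iff_of_isShortNF.1 h, one_pow, ← pow_mul, ← lt_div_iff₀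
    (by positivity)]
  refine norm_add_lt_of_lt_of_lt (norm_add_lt_of_lt_of_lt ?_ ?_) ?_ <;>
    rw [lt_div_iff₀ (by positivity)]
  · calc ‖x ^ 3‖ * ε ^ (3 * 2) = (‖x‖ * ε ^ 2) ^ 3 := by rw [norm_pow]; ring
      _ < 1 := pow_lt_one₀ (by positivity) hx three_ne_zero
  · calc ‖W.a₄ * x‖ * ε ^ (3 * 2) = ‖W.a₄‖ * ε ^ 4 * (‖x‖ * ε ^ 2) := by rw [norm_mul]; ring
      _ < 1 := mul_lt_one_of_nonneg_of_lt_one_left (by positivity)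
        (norm_a₄_mul_le.trans_lt hδ) hx.le
  · exact norm_a₆_mul_le.trans_lt hδ

lemma Y_ne_zero (h : W.Equation x y) (hδ : distortion W ε < 1) (hx : 1 ≤ ‖x‖ * ε ^ 2) : y ≠ 0 := by
  rintro rfl
  have := norm_Y_sq h hδ hx
  have := pow_pos (norm_X_pos hx) 3
  simp_all

lemma norm_X_mul_param_sq (h : W.Equation x y) (hδ : distortion W ε < 1) (hx : 1 ≤ ‖x‖ * ε ^ 2) :
    ‖x‖ * ‖x / y‖ ^ 2 = 1 := by
  rw [norm_div, div_pow, norm_Y_sq h hδ hx]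
  have := (norm_X_pos hx).ne'
  field_simp

lemma norm_Y_mul_param_cube (h : W.Equation x y) (hδ : distortion W ε < 1)
    (hx : 1 ≤ ‖x‖ * ε ^ 2) : ‖y‖ * ‖x / y‖ ^ 3 = 1 := by
  have := norm_ne_zero_iff.2 (Y_ne_zero h hδ hx)
  rw [norm_div, div_pow, ← norm_Y_sq h hδ hx]
  field_simp

lemma norm_param_le (h : W.Equation x y) (hε : 0 < ε) (hδ : distortion W ε < 1)
    (hx : 1 ≤ ‖x‖ * ε ^ 2) : ‖x / y‖ ≤ ε := by
  refine le_of_sq_le_sq (le_of_mul_le_mul_left ?_ (norm_X_pos hx)) hε.le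
  rwa [norm_X_mul_param_sq h hδ hx]

lemma norm_inv_Y_le (h : W.Equation x y) (hε : 0 < ε) (hδ : distortion W ε < 1)
    (hx : 1 ≤ ‖x‖ * ε ^ 2) : ‖y⁻¹‖ ≤ ε ^ 3 := by
  rw [norm_inv, inv_eq_of_mul_eq_one_right (norm_Y_mul_param_cube h hδ hx)]
  exact pow_le_pow_left₀ (norm_nonneg _) (norm_param_le h hε hδ hx) 3

end NearInfinity

section ChordNearInfinity

variable {K : Type*} [NormedField K] [IsUltrametricDist K] {W : WeierstrassCurve.Affine K} {ε : ℝ}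

lemma norm_slope_denominator_eq_one {z₁ w₁ w₂ : K} (hδ : distortion W ε < 1)
    (hz₁ : ‖z₁‖ ≤ ε) (hw₁ : ‖w₁‖ ≤ ε ^ 3) (hw₂ : ‖w₂‖ ≤ ε ^ 3) :
    ‖1 - (W.a₄ * z₁ * (w₁ + w₂) + W.a₆ * (w₁ ^ 2 + w₁ * w₂ + w₂ ^ 2))‖ = 1 := by
  have hε : 0 ≤ ε := (norm_nonneg _).trans hz₁
  rw [norm_eq_of_norm_sub_lt (y := 1), norm_one]
  rw [sub_sub_cancel_left, norm_neg, norm_one]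
  refine (norm_add_le_of_le_of_le ?_ ?_).trans_lt hδ
  · calc ‖W.a₄ * z₁ * (w₁ + w₂)‖ ≤ ‖W.a₄‖ * ε * ε ^ 3 := by
          rw [norm_mul, norm_mul]
          gcongr
          exact norm_add_le_of_le_of_le hw₁ hw₂
      _ = ‖W.a₄‖ * ε ^ 4 := by ring
      _ ≤ distortion W ε := norm_a₄_mul_le
  · calc ‖W.a₆ * (w₁ ^ 2 + w₁ * w₂ + w₂ ^ 2)‖ ≤ ‖W.a₆‖ * (ε ^ 3) ^ 2 := by
          rw [norm_mul]
          gcongr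
          refine norm_add_le_of_le_of_le (norm_add_le_of_le_of_le ?_ ?_) ?_
          · rw [norm_pow]; gcongr
          · rw [norm_mul, sq]; gcongr
          · rw [norm_pow]; gcongr
      _ = ‖W.a₆‖ * ε ^ 6 := by ring
      _ ≤ distortion W ε := norm_a₆_mul_le

lemma norm_slope_numerator_le {z₁ z₂ w₂ : K} (hδ : distortion W ε < 1) (hz₁ : ‖z₁‖ ≤ ε)
    (hz₂ : ‖z₂‖ ≤ ε) (hw₂ : ‖w₂‖ ≤ ε ^ 3) :
    ‖z₁ ^ 2 + z₁ * z₂ + z₂ ^ 2 + W.a₄ * w₂ ^ 2‖ ≤ ε ^ 2 := by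
  have hε : 0 ≤ ε := (norm_nonneg _).trans hz₁
  refine norm_add_le_of_le_of_le
    (norm_add_le_of_le_of_le (norm_add_le_of_le_of_le ?_ ?_) ?_) ?_
  · rw [norm_pow]; gcongr
  · rw [norm_mul, sq]; gcongr
  · rw [norm_pow]; gcongr
  · calc ‖W.a₄ * w₂ ^ 2‖ ≤ ‖W.a₄‖ * (ε ^ 3) ^ 2 := by rw [norm_mul, norm_pow]; gcongr
      _ = ‖W.a₄‖ * ε ^ 4 * ε ^ 2 := by ring
      _ ≤ ε ^ 2 := mul_le_of_le_one_left (by positivity) (norm_a₄_mul_le.trans hδ.le)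

lemma norm_cubic_eq_one {α : K} (hδ : distortion W ε < 1) (hα : ‖α‖ ≤ ε ^ 2) :
    ‖1 + (W.a₄ * α ^ 2 - W.a₆ * α ^ 3)‖ = 1 := by
  rw [norm_eq_of_norm_sub_lt (y := 1), norm_one]
  rw [add_sub_cancel_left, norm_one]
  refine (norm_sub_le_of_le_of_le ?_ ?_).trans_lt hδ
  · calc ‖W.a₄ * α ^ 2‖ ≤ ‖W.a₄‖ * (ε ^ 2) ^ 2 := by rw [norm_mul, norm_pow]; gcongr
      _ = ‖W.a₄‖ * ε ^ 4 := by ring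
      _ ≤ distortion W ε := norm_a₄_mul_le
  · calc ‖W.a₆ * α ^ 3‖ ≤ ‖W.a₆‖ * (ε ^ 2) ^ 3 := by rw [norm_mul, norm_pow]; gcongr
      _ = ‖W.a₆‖ * ε ^ 6 := by ring
      _ ≤ distortion W ε := norm_a₆_mul_le

variable {l n x₁ y₁ x₂ y₂ x₃ y₃ : K}

lemma IsChord.norm_slope_sq_le {c : ℝ} (h : IsChord W l n x₁ y₁ x₂ y₂ x₃ y₃)
    (h₁ : ‖x₁‖ ≤ c) (h₂ : ‖x₂‖ ≤ c) (h₃ : ‖x₃‖ ≤ c) :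
    ‖l‖ ^ 2 ≤ c := by
  rw [← norm_pow, ← h.sum_eq]
  exact norm_add_le_of_le_of_le (norm_add_le_of_le_of_le h₁ h₂) h₃

variable [W.IsShortNF]

namespace IsChord

lemma intercept_ne_zero_and_norm_slope_div_le (h : IsChord W l n x₁ y₁ x₂ y₂ x₃ y₃) (hε : 0 < ε)
    (hδ : distortion W ε < 1) (hx₁ : 1 ≤ ‖x₁‖ * ε ^ 2) (hx₂ : 1 ≤ ‖x₂‖ * ε ^ 2) :
    n ≠ 0 ∧ ‖l / n‖ ≤ ε ^ 2 := by
  have hy₁ := Y_ne_zero h.equation hδ hx₁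
  have hz₁ := norm_param_le h.equation hε hδ hx₁
  have hz₂ := norm_param_le h.rotate.equation hε hδ hx₂
  have hw₁ := norm_inv_Y_le h.equation hε hδ hx₁
  have hw₂ := norm_inv_Y_le h.rotate.equation hε hδ hx₂
  have hslope := h.slope_mul_eq hy₁ (Y_ne_zero h.rotate.equation hδ hx₂)
  have hD := norm_slope_denominator_eq_one hδ hz₁ hw₁ hw₂
  have hN := norm_slope_numerator_le hδ hz₁ hz₂ hw₂
  have hn : n ≠ 0 := by
    rintro rfl
    rw [neg_zero, zero_mul, mul_eq_zero, ← norm_eq_zero (a := 1 - _), hD] at hslope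
    exact hy₁ (by rw [h.y₁_eq, hslope.resolve_right one_ne_zero, zero_mul, add_zero])
  refine ⟨hn, ?_⟩
  have hnorm := congr(‖$hslope‖)
  rw [norm_mul, norm_mul, norm_neg, hD, mul_one] at hnorm
  rwa [norm_div, hnorm, mul_div_cancel_left₀ _ (norm_ne_zero_iff.2 hn)]

lemma norm_inv_intercept_le (h : IsChord W l n x₁ y₁ x₂ y₂ x₃ y₃) (hε : 0 < ε)
    (hδ : distortion W ε < 1) (hx₁ : 1 ≤ ‖x₁‖ * ε ^ 2) (hx₂ : 1 ≤ ‖x₂‖ * ε ^ 2) :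
    ‖n⁻¹‖ ≤ ε ^ 3 := by
  obtain ⟨hn, hα⟩ := h.intercept_ne_zero_and_norm_slope_div_le hε hδ hx₁ hx₂
  have hy₁ := Y_ne_zero h.equation hδ hx₁
  have hinv : n⁻¹ = l / n * (x₁ / y₁) + y₁⁻¹ := by
    field_simp
    linear_combination h.y₁_eq
  rw [hinv]
  refine norm_add_le_of_le_of_le ?_ (norm_inv_Y_le h.equation hε hδ hx₁)
  rw [norm_mul, pow_succ]
  gcongr
  exact norm_param_le h.equation hε hδ hx₁

lemma Y₃_ne_zero (h : IsChord W l n x₁ y₁ x₂ y₂ x₃ y₃) (hε : 0 < ε)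
    (hδ : distortion W ε < 1) (hx₁ : 1 ≤ ‖x₁‖ * ε ^ 2) (hx₂ : 1 ≤ ‖x₂‖ * ε ^ 2) : y₃ ≠ 0 := by
  obtain ⟨hn, hα⟩ := h.intercept_ne_zero_and_norm_slope_div_le hε hδ hx₁ hx₂
  have hG := norm_cubic_eq_one hδ hα
  rintro rfl
  have : n ^ 3 * (1 + (W.a₄ * (l / n) ^ 2 - W.a₆ * (l / n) ^ 3)) = 0 := by
    field_simp
    linear_combination -h.mul_mul_eq
  rw [mul_eq_zero, or_iff_right (pow_ne_zero 3 hn), ← norm_eq_zero, hG] at this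
  exact one_ne_zero this

lemma norm_param_add_add_le (h : IsChord W l n x₁ y₁ x₂ y₂ x₃ y₃) (hε : 0 < ε)
    (hδ : distortion W ε < 1) (hx₁ : 1 ≤ ‖x₁‖ * ε ^ 2) (hx₂ : 1 ≤ ‖x₂‖ * ε ^ 2) :
    ‖x₁ / y₁ + x₂ / y₂ + x₃ / y₃‖ ≤ distortion W ε * ε := by
  obtain ⟨hn, hα⟩ := h.intercept_ne_zero_and_norm_slope_div_le hε hδ hx₁ hx₂
  have hβ := h.norm_inv_intercept_le hε hδ hx₁ hx₂
  have hG := norm_cubic_eq_one hδ hα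
  set G := 1 + (W.a₄ * (l / n) ^ 2 - W.a₆ * (l / n) ^ 3) with hG_def
  have hy₁ := Y_ne_zero h.equation hδ hx₁
  have hy₂ := Y_ne_zero h.rotate.equation hδ hx₂
  have hy₃ := h.Y₃_ne_zero hε hδ hx₁ hx₂
  have hprod : y₁ * y₂ * y₃ = n ^ 3 * G := by
    rw [h.mul_mul_eq, hG_def]
    field_simp
    ring
  have hsum : (x₁ / y₁ + x₂ / y₂ + x₃ / y₃) * G =
      (2 : ℕ) * (W.a₄ * (l / n) * n⁻¹) - (3 : ℕ) * (W.a₆ * (l / n) ^ 2 * n⁻¹) := by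
    have : G = y₁ * y₂ * y₃ / n ^ 3 := by rw [hprod, mul_div_cancel_left₀ _ (pow_ne_zero 3 hn)]
    rw [this]
    field_simp
    push_cast
    linear_combination h.sum_mul_mul_eq
  rw [← mul_one ‖_‖, ← hG, ← norm_mul, hsum]
  refine norm_sub_le_of_le_of_le (norm_natCast_mul_le _ ?_) (norm_natCast_mul_le _ ?_)
  · calc ‖W.a₄ * (l / n) * n⁻¹‖ ≤ ‖W.a₄‖ * ε ^ 2 * ε ^ 3 := by
          rw [norm_mul, norm_mul]; gcongr
      _ = ‖W.a₄‖ * ε ^ 4 * ε := by ring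
      _ ≤ distortion W ε * ε := by gcongr; exact norm_a₄_mul_le
  · calc ‖W.a₆ * (l / n) ^ 2 * n⁻¹‖ ≤ ‖W.a₆‖ * (ε ^ 2) ^ 2 * ε ^ 3 := by
          rw [norm_mul, norm_mul, norm_pow]; gcongr
      _ = ‖W.a₆‖ * ε ^ 6 * ε := by ring
      _ ≤ distortion W ε * ε := by gcongr; exact norm_a₆_mul_le

lemma one_le_norm_X₃_mul (h : IsChord W l n x₁ y₁ x₂ y₂ x₃ y₃) (hε : 0 < ε)
    (hδ : distortion W ε < 1) (hx₁ : 1 ≤ ‖x₁‖ * ε ^ 2) (hx₂ : 1 ≤ ‖x₂‖ * ε ^ 2) :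
    1 ≤ ‖x₃‖ * ε ^ 2 := by
  obtain ⟨hn, hα⟩ := h.intercept_ne_zero_and_norm_slope_div_le hε hδ hx₁ hx₂
  have hy₃ := h.Y₃_ne_zero hε hδ hx₁ hx₂
  have hz₃ : ‖x₃ / y₃‖ ≤ ε := by
    rw [← add_sub_cancel_left (x₁ / y₁ + x₂ / y₂) (x₃ / y₃)]
    refine norm_sub_le_of_le_of_le ?_ (norm_add_le_of_le_of_le
      (norm_param_le h.equation hε hδ hx₁) (norm_param_le h.rotate.equation hε hδ hx₂))
    exact (h.norm_param_add_add_le hε hδ hx₁ hx₂).trans (mul_le_of_le_one_left hε.le hδ.le)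
  have hw₃ : ‖y₃⁻¹‖ ≤ ε ^ 3 := by
    have hinv : y₃⁻¹ = n⁻¹ - l / n * (x₃ / y₃) := by
      field_simp
      linear_combination -h.y₃_eq
    rw [hinv]
    refine norm_sub_le_of_le_of_le (h.norm_inv_intercept_le hε hδ hx₁ hx₂) ?_
    rw [norm_mul, pow_succ]
    gcongr
  by_contra! hx₃
  refine (norm_Y_mul_lt_one h.rotate.rotate.equation hε hδ hx₃).not_ge ?_
  calc 1 = ‖y₃‖ * ‖y₃⁻¹‖ := by rw [← norm_mul, mul_inv_cancel₀ hy₃, norm_one]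
    _ ≤ ‖y₃‖ * ε ^ 3 := by gcongr

end IsChord

end ChordNearInfinity

section Points

open WeierstrassCurve.Affine

variable {K : Type*} [NormedField K] {W : WeierstrassCurve.Affine K} {ε : ℝ}

/-- The local parameter `x / y` of the curve at infinity. The points with `y = 0` get the junk value
`0`, but they are never near infinity. -/
def param : W.Point → K
  | 0 => 0
  | .some x y _ => x / y

@[simp] lemma param_zero : param (0 : W.Point) = 0 := rfl

@[simp] lemma param_some {x y : K} (h : W.Nonsingular x y) : param (.some x y h) = x / y := rfl

@[simp] lemma param_neg [W.IsShortNF] (P : W.Point) : param (-P) = -param P := by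
  rcases P with _ | ⟨x, y, h⟩
  · exact neg_zero.symm
  · rw [Point.neg_some, param_some, param_some, negY_of_isShortNF, div_neg]

variable [IsUltrametricDist K] [DecidableEq K] [W.IsShortNF]

/-- The neighbourhood `‖x / y‖ ≤ ε` of infinity, for `ε` so small that it is a subgroup. Its members
other than infinity are cut out by the equivalent condition `1 ≤ ‖x‖ * ε ^ 2`, which has no junk
values. -/
def nearInfinity (W : WeierstrassCurve.Affine K) [W.IsShortNF] (hε : 0 < ε)
    (hδ : distortion W ε < 1) : AddSubgroup W.Point where
  carrier := {P | ∀ x y h, P = .some x y h → 1 ≤ ‖x‖ * ε ^ 2}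
  zero_mem' _ _ h h₀ := (Point.some_ne_zero h h₀.symm).elim
  neg_mem' {P} hP x y h hneg := by
    rw [neg_eq_iff_eq_neg, Point.neg_some] at hneg
    exact hP _ _ _ hneg
  add_mem' {P Q} hP hQ x y h hadd := by
    rcases P with _ | ⟨x₁, y₁, h₁⟩
    · exact hQ _ _ _ ((zero_add Q).symm.trans hadd)
    rcases Q with _ | ⟨x₂, y₂, h₂⟩
    · exact hP _ _ _ ((add_zero _).symm.trans hadd)
    obtain ⟨l, n, hchord⟩ := exists_isChord_of_add_eq hadd
    exact hchord.one_le_norm_X₃_mul hε hδ (hP _ _ _ rfl) (hQ _ _ _ rfl)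

variable {hε : 0 < ε} {hδ : distortion W ε < 1}

lemma some_mem_nearInfinity {x y : K} {h : W.Nonsingular x y} :
    .some x y h ∈ nearInfinity W hε hδ ↔ 1 ≤ ‖x‖ * ε ^ 2 :=
  ⟨fun hP ↦ hP _ _ _ rfl, fun hx _ _ _ heq ↦ by rwa [← (Point.some.inj heq).1]⟩

lemma norm_param_add_sub_le {P Q : W.Point} (hP : P ∈ nearInfinity W hε hδ)
    (hQ : Q ∈ nearInfinity W hε hδ) :
    ‖param (P + Q) - (param P + param Q)‖ ≤ distortion W ε * ε := by
  have hbound : 0 ≤ distortion W ε * ε := mul_nonneg distortion_nonneg hε.le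
  rcases P with _ | ⟨x₁, y₁, h₁⟩
  · simpa [← Point.zero_def] using hbound
  rcases Q with _ | ⟨x₂, y₂, h₂⟩
  · simpa [← Point.zero_def] using hbound
  rcases hadd : Point.some _ _ h₁ + Point.some _ _ h₂ with _ | ⟨x₃, y₃, h₃⟩
  · rw [← Point.zero_def, add_eq_zero_iff_neg_eq] at hadd
    rw [← hadd, param_neg, ← Point.zero_def, param_zero, add_neg_cancel, sub_zero, norm_zero]
    exact hbound
  · obtain ⟨l, n, hchord⟩ := exists_isChord_of_add_eq hadd
    have herror := hchord.norm_param_add_add_le hε hδ (some_mem_nearInfinity.1 hP)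
      (some_mem_nearInfinity.1 hQ)
    rwa [div_neg, ← sub_eq_add_neg, norm_sub_rev] at herror

lemma norm_param_nsmul_sub_le {P : W.Point} (hP : P ∈ nearInfinity W hε hδ) (k : ℕ) :
    ‖param (k • P) - k * param P‖ ≤ distortion W ε * ε := by
  induction k with
  | zero => simpa using mul_nonneg distortion_nonneg hε.le
  | succ k ih =>
    have hsplit : param ((k + 1) • P) - (k + 1 : ℕ) * param P =
        (param (k • P + P) - (param (k • P) + param P)) + (param (k • P) - k * param P) := by
      rw [succ_nsmul]
      push_cast
      ring
    rw [hsplit]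
    exact norm_add_le_of_le_of_le (norm_param_add_sub_le (AddSubgroup.nsmul_mem _ hP k) hP) ih

lemma norm_param_nsmul_of_distortion_lt {P : W.Point} (hP : P ∈ nearInfinity W hε hδ) {k : ℕ}
    (hk : distortion W ε < ‖(k : K)‖) : ‖param (k • P)‖ = ‖(k : K)‖ * ‖param P‖ := by
  rcases P with _ | ⟨x, y, h⟩
  · simp [← Point.zero_def]
  -- Shrinking the neighbourhood until `P` is on its boundary makes the error smaller than `‖kz‖`.
  have hx := some_mem_nearInfinity.1 hP
  have hmono := distortion_mono (W := W) (norm_nonneg _) (norm_param_le h.left hε hδ hx)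
  have hz : 0 < ‖x / y‖ :=
    (norm_nonneg _).lt_of_ne' fun h₀ ↦ by simpa [h₀] using norm_X_mul_param_sq h.left hδ hx
  have hmem : Point.some x y h ∈ nearInfinity W hz (hmono.trans_lt hδ) :=
    some_mem_nearInfinity.2 (norm_X_mul_param_sq h.left hδ hx).ge
  rw [← norm_mul]
  refine norm_eq_of_norm_sub_lt ((norm_param_nsmul_sub_le hmem k).trans_lt ?_)
  rw [norm_mul, param_some]
  gcongr
  exact hmono.trans_lt hk

/-- Multiplication by a prime `q` is only controlled directly if the error of the group law is
smaller than `‖q‖`; the general case follows by multiplicativity. -/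
lemma norm_param_nsmul (hprime : ∀ q : ℕ, q.Prime → distortion W ε < ‖(q : K)‖) {P : W.Point}
    (hP : P ∈ nearInfinity W hε hδ) (k : ℕ) : ‖param (k • P)‖ = ‖(k : K)‖ * ‖param P‖ := by
  induction k using Nat.recOnMul generalizing P with
  | zero => simp
  | one => simp
  | prime q hq => exact norm_param_nsmul_of_distortion_lt hP (hprime q hq)
  | mul i j hi hj =>
    rw [mul_nsmul', hi (AddSubgroup.nsmul_mem _ hP j), hj hP, Nat.cast_mul, norm_mul, mul_assoc]

end Points

section Compactness

open WeierstrassCurve.Affine Filter Topology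

variable {K : Type*} [NormedField K] {W : WeierstrassCurve.Affine K} [W.IsShortNF]

lemma equation_of_tendsto {ι : Type*} {F : Filter ι} [F.NeBot] {x y : ι → K} {x₀ y₀ : K}
    (h : ∀ i, W.Equation (x i) (y i)) (hx : Tendsto x F (𝓝 x₀)) (hy : Tendsto y F (𝓝 y₀)) :
    W.Equation x₀ y₀ := by
  simp_rw [equation_iff_of_isShortNF] at h ⊢
  exact tendsto_nhds_unique ((hy.pow 2).congr h)
    (((hx.pow 3).add (hx.const_mul _)).add tendsto_const_nhds)

/-- The slope of the chord through two nearby points `Q` and `-R` can only stay bounded if the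
gradient of the equation of the curve vanishes in the limit. -/
lemma not_nonsingular_of_tendsto {ι : Type*} {F : Filter ι} [F.NeBot]
    {l n x y x' y' x'' y'' : ι → K} {x₀ y₀ : K}
    (h : ∀ i, IsChord W (l i) (n i) (x i) (y i) (x' i) (-y' i) (x'' i) (y'' i))
    (hl : IsBoundedUnder (· ≤ ·) F (‖l ·‖)) (hx : Tendsto x F (𝓝 x₀)) (hy : Tendsto y F (𝓝 y₀))
    (hx' : Tendsto x' F (𝓝 x₀)) (hy' : Tendsto y' F (𝓝 y₀)) : ¬W.Nonsingular x₀ y₀ := by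
  have hsub : Tendsto (fun i ↦ l i * (x i - x' i)) F (𝓝 0) :=
    isBoundedUnder_le_mul_tendsto_zero hl (by simpa using hx.sub hx')
  have hadd : Tendsto (fun i ↦ l i * (y i + -y' i)) F (𝓝 0) :=
    isBoundedUnder_le_mul_tendsto_zero hl (by simpa using hy.add hy'.neg)
  simp_rw [(h _).slope_mul_sub, sub_neg_eq_add] at hsub
  simp_rw [(h _).slope_mul_add] at hadd
  have hgradY := tendsto_nhds_unique hsub (hy.add hy')
  have hgradX := tendsto_nhds_unique hadd
    ((((hx.pow 2).add (hx.mul hx')).add (hx'.pow 2)).add tendsto_const_nhds)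
  rw [nonsingular_iff]
  rintro ⟨-, hns | hns⟩ <;> apply hns <;> simp only [WeierstrassCurve.a₁_of_isShortNF,
    WeierstrassCurve.a₂_of_isShortNF, WeierstrassCurve.a₃_of_isShortNF]
  · linear_combination hgradX
  · linear_combination -hgradY

variable [IsUltrametricDist K] {ε : ℝ}

/-- Otherwise the multiples of `P` accumulate at an affine point, and the differences of nearby
multiples are multiples as well, hence not near infinity either. -/
lemma exists_nsmul_mem_nearInfinity [ProperSpace K] [DecidableEq K] [W.IsElliptic] (hε : 0 < ε)
    (hδ : distortion W ε < 1) {P : W.Point} (hP : ∀ k : ℕ, 0 < k → k • P ≠ 0) :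
    ∃ k : ℕ, 0 < k ∧ k • P ∈ nearInfinity W hε hδ := by
  by_contra! hfar
  have haffine (k : ℕ) : ∃ x y h, (k + 1) • P = .some x y h ∧ ‖x‖ * ε ^ 2 < 1 := by
    rcases hk : (k + 1) • P with _ | ⟨x, y, h⟩
    · exact (hP _ k.succ_pos hk).elim
    · exact ⟨x, y, h, rfl, not_le.1 fun hx ↦
        hfar _ k.succ_pos (hk ▸ some_mem_nearInfinity.2 hx)⟩
  choose x y h heq hx using haffine
  have hx_le (k : ℕ) : ‖x k‖ ≤ 1 / ε ^ 2 := ((lt_div_iff₀ (by positivity)).2 (hx k)).le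
  have hy_le (k : ℕ) : ‖y k‖ ≤ 1 / ε ^ 3 :=
    ((lt_div_iff₀ (by positivity)).2 (norm_Y_mul_lt_one (h k).left hε hδ (hx k))).le
  have hmem (k : ℕ) : (x k, y k) ∈
      Metric.closedBall 0 (1 / ε ^ 2) ×ˢ Metric.closedBall 0 (1 / ε ^ 3) :=
    ⟨mem_closedBall_zero_iff.2 (hx_le k), mem_closedBall_zero_iff.2 (hy_le k)⟩
  obtain ⟨⟨x₀, y₀⟩, -, φ, hφ, hlim⟩ := tendsto_subseq_of_bounded
    (Metric.isBounded_closedBall.prod Metric.isBounded_closedBall) hmem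
  have hx₀ : Tendsto (x ∘ φ) atTop (𝓝 x₀) := hlim.fst_nhds
  have hy₀ : Tendsto (y ∘ φ) atTop (𝓝 y₀) := hlim.snd_nhds
  have hchord (i : ℕ) : ∃ l n y'', IsChord W l n (x (φ (i + 1))) (y (φ (i + 1)))
      (x (φ i)) (-y (φ i)) (x (φ (i + 1) - φ i - 1)) y'' := by
    have hlt := hφ i.lt_succ_self
    obtain ⟨l, n, hln⟩ := exists_isChord_of_nsmul_eq (by lia) (heq (φ (i + 1))) (heq (φ i))
      (heq (φ (i + 1) - φ i - 1))
    exact ⟨l, n, _, hln⟩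
  choose l n y'' hchord using hchord
  have hl : IsBoundedUnder (· ≤ ·) atTop (‖l ·‖) := isBoundedUnder_of ⟨√(1 / ε ^ 2), fun i ↦
    Real.le_sqrt_of_sq_le ((hchord i).norm_slope_sq_le (hx_le _) (hx_le _) (hx_le _))⟩
  refine not_nonsingular_of_tendsto hchord hl (hx₀.comp (tendsto_add_atTop_nat 1))
    (hy₀.comp (tendsto_add_atTop_nat 1)) hx₀ hy₀ ?_
  exact equation_iff_nonsingular.1 (equation_of_tendsto (fun i ↦ (h (φ i)).left) hx₀ hy₀)

lemma exists_nsmul_norm_eq [ProperSpace K] [DecidableEq K] [W.IsElliptic] {δ : ℝ} (hδ : 0 < δ)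
    (hprime : ∀ q : ℕ, q.Prime → δ ≤ ‖(q : K)‖) {P : W.Point}
    (hP : ∀ k : ℕ, 0 < k → k • P ≠ 0) :
    ∃ k : ℕ, 0 < k ∧ ∃ z : K, ∀ (n : ℕ) (x y : K) (h : W.Nonsingular x y),
      n • k • P = .some x y h → ‖x‖ * ‖n * z‖ ^ 2 = 1 ∧ ‖y‖ * ‖n * z‖ ^ 3 = 1 := by
  obtain ⟨ε, hε, hlt⟩ := exists_pos_distortion_lt W (lt_min hδ one_pos)
  have hε₁ : distortion W ε < 1 := hlt.trans_le (min_le_right _ _)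
  obtain ⟨k, hk, hmem⟩ := exists_nsmul_mem_nearInfinity hε hε₁ hP
  refine ⟨k, hk, param (k • P), fun n x y h heq ↦ ?_⟩
  have hx : 1 ≤ ‖x‖ * ε ^ 2 := AddSubgroup.nsmul_mem _ hmem n _ _ h heq
  have hparam := norm_param_nsmul
    (fun q hq ↦ (hlt.trans_le (min_le_left _ _)).trans_le (hprime q hq)) hmem n
  rw [heq, param_some, ← norm_mul] at hparam
  rw [← hparam]
  exact ⟨norm_X_mul_param_sq h.left hε₁ hx, norm_Y_mul_param_cube h.left hε₁ hx⟩

end Compactness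

section Padic

open WeierstrassCurve.Affine

variable {p : ℕ} [Fact p.Prime]

lemma inv_le_norm_natCast_of_prime {q : ℕ} (hq : q.Prime) : (p : ℝ)⁻¹ ≤ ‖(q : ℚ_[p])‖ := by
  have hp := (Fact.out : p.Prime)
  obtain rfl | hpq := eq_or_ne q p
  · exact Padic.norm_p.ge
  · rw [Padic.norm_natCast_eq_one_iff.2 ((Nat.coprime_primes hp hq).2 hpq.symm)]
    exact Nat.cast_inv_le_one p

lemma valuation_eq_neg_mul_of_norm {x z : ℚ_[p]} {k : ℕ} (h : ‖x‖ * ‖z‖ ^ k = 1) :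
    x.valuation = -k * z.valuation := by
  rw [← norm_pow, ← norm_mul] at h
  have hne : x * z ^ k ≠ 0 := norm_ne_zero_iff.1 (h ▸ one_ne_zero)
  have hval : (x * z ^ k).valuation = 0 := by
    rw [Padic.norm_eq_zpow_neg_valuation hne, zpow_eq_one_iff_right₀ (by positivity)
      (by exact_mod_cast (Fact.out : p.Prime).ne_one), neg_eq_zero] at h
    exact h
  rw [Padic.valuation_mul (left_ne_zero_of_mul hne) (right_ne_zero_of_mul hne),
    Padic.valuation_pow] at hval
  linear_combination hval

lemma exists_nsmul_padicValRat_eq (p : ℕ) [Fact p.Prime] {W : WeierstrassCurve.Affine ℚ}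
    [W.IsShortNF] [W.IsElliptic] {P : W.Point} (hP : ∀ k : ℕ, 0 < k → k • P ≠ 0) :
    ∃ k : ℕ, 0 < k ∧ ∃ s : ℤ, ∀ (n : ℕ) (x y : ℚ) (h : W.Nonsingular x y),
      n • k • P = .some x y h →
        padicValRat p x = -2 * (padicValNat p n + s) ∧
        padicValRat p y = -3 * (padicValNat p n + s) := by
  classical
  let W' : WeierstrassCurve.Affine ℚ_[p] := W.map (algebraMap ℚ ℚ_[p])
  have : W'.IsShortNF := ⟨by simp [W'], by simp [W'], by simp [W']⟩
  have : W'.IsElliptic := inferInstanceAs (W.map (algebraMap ℚ ℚ_[p])).IsElliptic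
  let f : W.Point →+ W'.Point := Point.map (W' := W) (Algebra.ofId ℚ ℚ_[p])
  have hinj : Function.Injective f := Point.map_injective (W' := W) _
  have hf : ∀ k : ℕ, 0 < k → k • f P ≠ 0 := fun k hk ↦ by
    rw [← map_nsmul]
    exact (map_ne_zero_iff f hinj).2 (hP k hk)
  obtain ⟨k, hk, z, hz⟩ := exists_nsmul_norm_eq (δ := (p : ℝ)⁻¹)
    (inv_pos.2 (mod_cast (Fact.out : p.Prime).pos)) (fun q ↦ inv_le_norm_natCast_of_prime) hf
  refine ⟨k, hk, z.valuation, fun n x y h heq ↦ ?_⟩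
  obtain ⟨hx, hy⟩ := hz n x y _ (by rw [← map_nsmul, ← map_nsmul, heq]; rfl)
  have hnz : (n * z : ℚ_[p]) ≠ 0 := by rintro h₀; simp [h₀] at hx
  rw [← Padic.valuation_ratCast, ← Padic.valuation_ratCast, ← Padic.valuation_natCast,
    ← Padic.valuation_mul (left_ne_zero_of_mul hnz) (right_ne_zero_of_mul hnz)]
  exact ⟨valuation_eq_neg_mul_of_norm hx, valuation_eq_neg_mul_of_norm hy⟩

end Padic

section Rational

open WeierstrassCurve.Affine

variable {ι : Type*}

lemma padicValNat_prod_pow [Fintype ι] {p : ι → ℕ} [∀ i, Fact (p i).Prime]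
    (hp : Function.Injective p) (e : ι → ℕ) (i : ι) : padicValNat (p i) (∏ j, p j ^ e j) = e i := by
  classical
  have hprime (j : ι) : (p j).Prime := Fact.out
  rw [← Nat.factorization_def _ (hprime i),
    Nat.factorization_prod fun j _ ↦ pow_ne_zero _ (hprime j).ne_zero]
  simp [(hprime _).factorization, Finsupp.single_apply, hp.eq_iff]

variable {W : WeierstrassCurve.Affine ℚ} [W.IsShortNF] [W.IsElliptic] {P : W.Point}

lemma exists_nsmul_forall_padicValRat_eq [Finite ι] (p : ι → ℕ)
    [∀ i, Fact (p i).Prime] (hP : ∀ k : ℕ, 0 < k → k • P ≠ 0) :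
    ∃ k : ℕ, 0 < k ∧ ∃ s : ι → ℤ, ∀ (n : ℕ) (x y : ℚ) (h : W.Nonsingular x y),
      n • k • P = .some x y h → ∀ i,
        padicValRat (p i) x = -2 * (padicValNat (p i) n + s i) ∧
        padicValRat (p i) y = -3 * (padicValNat (p i) n + s i) := by
  cases nonempty_fintype ι
  choose k hk s hval using fun i ↦ exists_nsmul_padicValRat_eq (p i) hP
  have hprod : 0 < ∏ i, k i := Finset.prod_pos fun i _ ↦ hk i
  choose c hc using fun i ↦ Finset.dvd_prod_of_mem k (Finset.mem_univ i)
  refine ⟨∏ i, k i, hprod, fun i ↦ padicValNat (p i) (c i) + s i, fun n x y h heq i ↦ ?_⟩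
  have hn : n ≠ 0 := fun h₀ ↦ Point.some_ne_zero h (by rw [← heq, h₀, zero_nsmul])
  have hci : c i ≠ 0 := right_ne_zero_of_mul (hc i ▸ hprod.ne')
  rw [hc i, mul_nsmul, ← mul_nsmul'] at heq
  simpa only [padicValNat.mul hn hci, Nat.cast_add, add_assoc] using hval i _ x y h heq

end Rational

end ShortWeierstrass

/-- Let `E : Y² = X³ + aX + b` be an elliptic curve over `ℚ` whose Mordell–Weil group
has positive rank, and let `p₁, …, p_t` be distinct primes. Then there is an integer `N`
such that for all integers `m₁, …, m_t ≥ N` there is a rational point `(X, Y)` of `E`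
with `ord_{pᵢ}(X) = −2mᵢ` and `ord_{pᵢ}(Y) = −3mᵢ` for all `i`. -/
theorem valuation_points_on_elliptic_curve (a b : ℚ) (hΔ : 4 * a ^ 3 + 27 * b ^ 2 ≠ 0)
    (W : WeierstrassCurve ℚ) (hW : W = WeierstrassCurve.mk 0 0 0 a b)
    (hrank : ∃ P : W.toAffine.Point, ∀ n : ℕ, 0 < n → n • P ≠ 0)
    (t : ℕ) (p : Fin t → ℕ) (hp : ∀ i, (p i).Prime) (hinj : Function.Injective p) :
    ∃ N : ℤ, ∀ m : Fin t → ℤ, (∀ i, N ≤ m i) →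
      ∃ X Y : ℚ, Y ^ 2 = X ^ 3 + a * X + b ∧
        ∀ i, padicValRat (p i) X = -2 * m i ∧ padicValRat (p i) Y = -3 * m i := by
  have (i : Fin t) : Fact (p i).Prime := ⟨hp i⟩
  have : W.IsShortNF := hW ▸ ⟨rfl, rfl, rfl⟩
  have : W.IsElliptic := ShortWeierstrass.isElliptic_of_isShortNF (by simpa [hW] using hΔ)
  obtain ⟨P, hP⟩ := hrank
  obtain ⟨k, hk, s, hval⟩ := ShortWeierstrass.exists_nsmul_forall_padicValRat_eq p hP
  obtain ⟨N, hN⟩ := (Set.finite_range s).bddAbove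
  refine ⟨N, fun m hm ↦ ?_⟩
  choose e he using fun i ↦ Int.le.dest ((hN (Set.mem_range_self i)).trans (hm i))
  have hn : 0 < ∏ j, p j ^ e j := Finset.prod_pos fun j _ ↦ pow_pos (hp j).pos _
  rcases hQ : (∏ j, p j ^ e j) • k • P with _ | ⟨X, Y, h⟩
  · rw [← mul_nsmul'] at hQ
    exact (hP _ (Nat.mul_pos hn hk) hQ).elim
  · refine ⟨X, Y, ?_, fun i ↦ ?_⟩
    · simpa [hW] using ShortWeierstrass.equation_iff_of_isShortNF.1 h.left
    · rw [← he i, add_comm, ← ShortWeierstrass.padicValNat_prod_pow hinj e i]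
      exact hval _ X Y h hQ i
end
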